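/- arXiv:1608.01359 — 2 statements merged into one kernel-verified Lean document; each statement's English description precedes it below -/
import Mathlib

section
/- Global boundary Lipschitz bound in the unit ball. For every integer n ≥ 2, reals 0 < λ ≤ Λ, exponents q > n and p with n ≤ p ≤ q, d₀ ∈ (0,1/4], and K > 0, there exists a constant C > 0 such that the following holds. Let b, f : B₁ → ℝ be continuous with b ≥ 0 and ‖b‖_{L^q(B₁)} ≤ K, and let u be continuous on the closed ball cl(B₁) and C² on B₁, with L⁺[u] ≥ −f in B₁ and u ≤ 0 on ∂B₁. Then u(x) ≤ C·( ‖f⁺‖_{L^p(B₁)} + ‖f⁺‖_{L^q({x ∈ B₁ : 1−|x| < d₀})} )·(1−|x|) for all x ∈ B₁. -/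
open MeasureTheory
open scoped ENNReal

/-- The Pucci minimal extremal operator `𝓜⁻(M)` with ellipticity constants `lam ≤ Lam`:
the infimum of `tr(A*M)` over symmetric matrices `A` with `lam•I ≤ A ≤ Lam•I`. -/
noncomputable def pucciMinus (n : ℕ) (lam Lam : ℝ) (M : Matrix (Fin n) (Fin n) ℝ) : ℝ :=
  sInf { t : ℝ | ∃ A : Matrix (Fin n) (Fin n) ℝ, A.IsSymm ∧
    (A - lam • (1 : Matrix (Fin n) (Fin n) ℝ)).PosSemidef ∧
    (Lam • (1 : Matrix (Fin n) (Fin n) ℝ) - A).PosSemidef ∧ t = (A * M).trace }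

/-- The Pucci maximal extremal operator `𝓜⁺(M)`. -/
noncomputable def pucciPlus (n : ℕ) (lam Lam : ℝ) (M : Matrix (Fin n) (Fin n) ℝ) : ℝ :=
  sSup { t : ℝ | ∃ A : Matrix (Fin n) (Fin n) ℝ, A.IsSymm ∧
    (A - lam • (1 : Matrix (Fin n) (Fin n) ℝ)).PosSemidef ∧
    (Lam • (1 : Matrix (Fin n) (Fin n) ℝ) - A).PosSemidef ∧ t = (A * M).trace }

/-- The Hessian matrix `D²u(x)` of `u` at `x`. -/
noncomputable def hess (n : ℕ) (u : EuclideanSpace ℝ (Fin n) → ℝ)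
    (x : EuclideanSpace ℝ (Fin n)) : Matrix (Fin n) (Fin n) ℝ :=
  fun i j => fderiv ℝ (fun y => fderiv ℝ u y (EuclideanSpace.single j (1 : ℝ))) x
    (EuclideanSpace.single i (1 : ℝ))

/-- The euclidean norm `|Du(x)|` of the gradient of `u` at `x`. -/
noncomputable def gradNorm (n : ℕ) (u : EuclideanSpace ℝ (Fin n) → ℝ)
    (x : EuclideanSpace ℝ (Fin n)) : ℝ := ‖fderiv ℝ u x‖

/-- The `L^p` norm `(∫_E |g|^p)^(1/p)`, as a Lebesgue integral valued in `[0,∞]`. -/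
noncomputable def LpNormE (n : ℕ) (p : ℝ) (g : EuclideanSpace ℝ (Fin n) → ℝ)
    (E : Set (EuclideanSpace ℝ (Fin n))) : ℝ≥0∞ :=
  (∫⁻ x in E, ENNReal.ofReal (|g x| ^ p)) ^ (1 / p)

/-- The last (`n`-th) coordinate `x_n` of a point of `ℝⁿ`. -/
def lastC (n : ℕ) (hn : 1 ≤ n) (x : EuclideanSpace ℝ (Fin n)) : ℝ := x ⟨n - 1, by omega⟩

/-- The open half-ball `B_R⁺ = {|x| < R, x_n > 0}`. -/
def halfBall (n : ℕ) (hn : 1 ≤ n) (R : ℝ) : Set (EuclideanSpace ℝ (Fin n)) :=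
  {x | ‖x‖ < R ∧ 0 < lastC n hn x}

/-- The flat boundary part `B_R⁰ = {|x| ≤ R, x_n = 0}`. -/
def flatB (n : ℕ) (hn : 1 ≤ n) (R : ℝ) : Set (EuclideanSpace ℝ (Fin n)) :=
  {x | ‖x‖ ≤ R ∧ lastC n hn x = 0}

/-- The norm `‖g‖_{L^{p,q}(B_R⁺)} = ‖g‖_{L^p(B_R⁺)} + ‖g‖_{L^q(B_R⁺ ∩ {x_n < d0})}`. -/
noncomputable def LpqNormHB (n : ℕ) (hn : 1 ≤ n) (p q d0 R : ℝ)
    (g : EuclideanSpace ℝ (Fin n) → ℝ) : ℝ≥0∞ :=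
  LpNormE n p g (halfBall n hn R) +
    LpNormE n q g {x ∈ halfBall n hn R | lastC n hn x < d0}

/-- The open cube `Q_ρ` of side `ρ` centered at `(0,…,0,ρ/2)`. -/
def cubeQ (n : ℕ) (hn : 1 ≤ n) (ρ : ℝ) : Set (EuclideanSpace ℝ (Fin n)) :=
  {x | (∀ i : Fin n, i.1 ≠ n - 1 → |x i| < ρ / 2) ∧ 0 < lastC n hn x ∧ lastC n hn x < ρ}

/-- The norm `‖g‖_{L^{p,q}(Q₂)} = ‖g‖_{L^p(Q₂)} + ‖g‖_{L^q(Q₂ ∩ {x_n < d0})}`. -/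
noncomputable def LpqNormQ (n : ℕ) (hn : 1 ≤ n) (p q d0 : ℝ)
    (g : EuclideanSpace ℝ (Fin n) → ℝ) : ℝ≥0∞ :=
  LpNormE n p g (cubeQ n hn 2) +
    LpNormE n q g {x ∈ cubeQ n hn 2 | lastC n hn x < d0}


/-! ### Matrix facts -/

open scoped MatrixOrder in
lemma aux_trace_mul_nonneg {n : ℕ} {P N : Matrix (Fin n) (Fin n) ℝ} (hP : P.PosSemidef)
    (hN : N.PosSemidef) : 0 ≤ (P * N).trace := by
  obtain ⟨C, rfl⟩ := CStarAlgebra.nonneg_iff_eq_star_mul_self.mp hP.nonneg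
  rw [Matrix.star_eq_conjTranspose, Matrix.mul_assoc, Matrix.trace_mul_comm]
  exact (hN.mul_mul_conjTranspose_same C).trace_nonneg

lemma aux_det_le_trace_pow {n : ℕ} {N : Matrix (Fin n) (Fin n) ℝ} (hN : N.PosSemidef) :
    N.det ≤ N.trace ^ n := by
  have h1 := hN.1.det_eq_prod_eigenvalues
  have h2 := hN.1.trace_eq_sum_eigenvalues
  simp only [RCLike.ofReal_real_eq_id, id] at h1 h2
  rw [h1, h2]
  calc ∏ i, hN.1.eigenvalues i ≤ ∏ _i : Fin n, (∑ i, hN.1.eigenvalues i) := by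
        refine Finset.prod_le_prod (fun i _ => hN.eigenvalues_nonneg i) (fun i _ => ?_)
        exact Finset.single_le_sum (f := hN.1.eigenvalues)
          (fun j _ => hN.eigenvalues_nonneg j) (Finset.mem_univ i)
    _ = _ := by simp

/-- Upper bound of `pucciPlus` of a sum of a nonpositive matrix and of a supersolution matrix. -/
lemma aux_pucci_le {n : ℕ} {lam Lam : ℝ} (hLam : lam ≤ Lam)
    {M N W : Matrix (Fin n) (Fin n) ℝ} (hM : M = W - N) (hN : N.PosSemidef)
    (hW : ∀ A : Matrix (Fin n) (Fin n) ℝ,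
      (A - lam • (1 : Matrix (Fin n) (Fin n) ℝ)).PosSemidef →
      (Lam • (1 : Matrix (Fin n) (Fin n) ℝ) - A).PosSemidef → (A * W).trace ≤ 0) :
    pucciPlus n lam Lam M ≤ - (lam * N.trace) := by
  unfold pucciPlus
  apply csSup_le
  · refine ⟨_, lam • 1, ?_, ?_, ?_, rfl⟩
    · simp [Matrix.IsSymm]
    · simpa using Matrix.PosSemidef.zero
    · rw [← sub_smul]
      exact Matrix.PosSemidef.one.smul (by linarith)
  · rintro t ⟨A, -, h1, h2, rfl⟩
    have h3 := hW A h1 h2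
    have h4 := aux_trace_mul_nonneg h1 hN
    rw [Matrix.sub_mul, Matrix.trace_sub, Matrix.smul_mul, Matrix.one_mul, Matrix.trace_smul,
      smul_eq_mul] at h4
    rw [hM, Matrix.mul_sub, Matrix.trace_sub]
    linarith

/-- The quadratic barrier matrix is a supersolution. -/
lemma aux_barrier_trace {n : ℕ} {lam Lam : ℝ} (hlam : 0 < lam) (z : EuclideanSpace ℝ (Fin n))
    (hz : ‖z‖ = 1) (c B : ℝ) (hc : 0 ≤ c) (hB : B = n * Lam / lam) (hB0 : 0 ≤ B)
    (A : Matrix (Fin n) (Fin n) ℝ)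
    (h1 : (A - lam • (1 : Matrix (Fin n) (Fin n) ℝ)).PosSemidef)
    (h2 : (Lam • (1 : Matrix (Fin n) (Fin n) ℝ) - A).PosSemidef) :
    (A * (c • ((1 : Matrix (Fin n) (Fin n) ℝ) - B • Matrix.vecMulVec z.ofLp z.ofLp))).trace ≤ 0 := by
  have hzz : dotProduct z.ofLp z.ofLp = 1 := by
    have := EuclideanSpace.real_norm_sq_eq z
    rw [hz] at this
    simp only [dotProduct]
    rw [← one_pow 2, this]
    exact Finset.sum_congr rfl (fun i _ => by ring)
  have hpsd : (Matrix.vecMulVec z.ofLp z.ofLp).PosSemidef := by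
    simpa using Matrix.posSemidef_vecMulVec_self_star z.ofLp
  have h3 := aux_trace_mul_nonneg h1 hpsd
  have h4 := h2.trace_nonneg
  rw [Matrix.sub_mul, Matrix.trace_sub, Matrix.smul_mul, Matrix.one_mul, Matrix.trace_smul,
    smul_eq_mul, Matrix.trace_vecMulVec, hzz] at h3
  rw [Matrix.trace_sub, Matrix.trace_smul, Matrix.trace_one, Fintype.card_fin, smul_eq_mul] at h4
  rw [Matrix.mul_smul, Matrix.trace_smul, Matrix.mul_sub, Matrix.mul_one, Matrix.trace_sub,
    Matrix.mul_smul, Matrix.trace_smul, smul_eq_mul, smul_eq_mul]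
  apply mul_nonpos_of_nonneg_of_nonpos hc
  have hB' : B * lam = n * Lam := by rw [hB]; field_simp
  nlinarith

/-! ### Second order calculus -/

/-- The gradient as a vector. -/
noncomputable def auxGrad (n : ℕ) (u : EuclideanSpace ℝ (Fin n) → ℝ)
    (x : EuclideanSpace ℝ (Fin n)) : EuclideanSpace ℝ (Fin n) :=
  WithLp.toLp 2 (fun j => fderiv ℝ u x (EuclideanSpace.single j (1 : ℝ)))

lemma aux_sum_single {n : ℕ} (h : EuclideanSpace ℝ (Fin n)) :
    h = ∑ i, h i • EuclideanSpace.single i (1 : ℝ) := by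
  have := (EuclideanSpace.basisFun (Fin n) ℝ).sum_repr h
  simpa using this.symm

lemma aux_grad_inner {n : ℕ} (u : EuclideanSpace ℝ (Fin n) → ℝ)
    (x h : EuclideanSpace ℝ (Fin n)) : fderiv ℝ u x h = inner ℝ (auxGrad n u x) h := by
  conv_lhs => rw [aux_sum_single h]
  rw [map_sum, PiLp.inner_apply]
  simp [auxGrad]

lemma aux_norm_fderiv_le {n : ℕ} (u : EuclideanSpace ℝ (Fin n) → ℝ)
    (x : EuclideanSpace ℝ (Fin n)) : ‖fderiv ℝ u x‖ ≤ ‖auxGrad n u x‖ := by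
  refine ContinuousLinearMap.opNorm_le_bound _ (norm_nonneg _) (fun h => ?_)
  rw [aux_grad_inner]
  exact norm_inner_le_norm _ _

lemma aux_diff_fderiv {n : ℕ} {u : EuclideanSpace ℝ (Fin n) → ℝ}
    {x : EuclideanSpace ℝ (Fin n)} (hu : ContDiffAt ℝ 2 u x) :
    DifferentiableAt ℝ (fderiv ℝ u) x := by
  have : ContDiffAt ℝ 1 (fderiv ℝ u) x := hu.fderiv_right (by norm_num)
  exact this.differentiableAt (by norm_num)

lemma aux_hess_eq {n : ℕ} {u : EuclideanSpace ℝ (Fin n) → ℝ}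
    {x : EuclideanSpace ℝ (Fin n)} (hu : ContDiffAt ℝ 2 u x) (i j : Fin n) :
    hess n u x i j = fderiv ℝ (fderiv ℝ u) x (EuclideanSpace.single i (1 : ℝ))
      (EuclideanSpace.single j (1 : ℝ)) := by
  unfold hess
  rw [fderiv_clm_apply (aux_diff_fderiv hu) (differentiableAt_const _)]
  simp

lemma aux_hess_quad {n : ℕ} {u : EuclideanSpace ℝ (Fin n) → ℝ}
    {x : EuclideanSpace ℝ (Fin n)} (hu : ContDiffAt ℝ 2 u x) (h : EuclideanSpace ℝ (Fin n)) :
    dotProduct h.ofLp ((hess n u x).mulVec h.ofLp) = fderiv ℝ (fderiv ℝ u) x h h := by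
  conv_rhs => rw [aux_sum_single h]
  simp only [map_sum, map_smul, _root_.sum_apply, _root_.smul_apply,
    dotProduct, Matrix.mulVec, aux_hess_eq hu, smul_eq_mul, Finset.mul_sum]
  exact Finset.sum_comm.trans (Finset.sum_congr rfl fun i _ => Finset.sum_congr rfl fun j _ => by
    ring)

lemma aux_hess_symm {n : ℕ} {u : EuclideanSpace ℝ (Fin n) → ℝ}
    {x : EuclideanSpace ℝ (Fin n)} (hu : ContDiffAt ℝ 2 u x) (i j : Fin n) :
    hess n u x i j = hess n u x j i := by
  rw [aux_hess_eq hu, aux_hess_eq hu]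
  exact hu.isSymmSndFDerivAt (by simp) _ _

lemma aux_grad_hasFDerivAt {n : ℕ} {u : EuclideanSpace ℝ (Fin n) → ℝ}
    {x : EuclideanSpace ℝ (Fin n)} (hu : ContDiffAt ℝ 2 u x) :
    HasFDerivAt (auxGrad n u) (fderiv ℝ (auxGrad n u) x) x ∧
      (fderiv ℝ (auxGrad n u) x).det = (hess n u x).det := by
  have hd : DifferentiableAt ℝ (auxGrad n u) x := by
    rw [differentiableAt_euclidean]
    intro j
    exact (aux_diff_fderiv hu).clm_apply (differentiableAt_const _)
  refine ⟨hd.hasFDerivAt, ?_⟩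
  rw [← Matrix.det_transpose, ContinuousLinearMap.det,
    ← LinearMap.det_toMatrix (EuclideanSpace.basisFun (Fin n) ℝ).toBasis]
  congr 1
  ext j i
  rw [LinearMap.toMatrix_apply]
  simp only [Matrix.transpose_apply, OrthonormalBasis.coe_toBasis,
    EuclideanSpace.basisFun_apply, OrthonormalBasis.coe_toBasis_repr_apply,
    EuclideanSpace.basisFun_repr, ContinuousLinearMap.coe_coe]
  have h1 := ((EuclideanSpace.proj j : EuclideanSpace ℝ (Fin n) →L[ℝ] ℝ).hasFDerivAt.comp x
    hd.hasFDerivAt).fderiv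
  unfold hess
  have h2 : (fun y => auxGrad n u y j) =
    fun y => fderiv ℝ u y (EuclideanSpace.single j (1 : ℝ)) := rfl
  rw [← h2]
  exact (congrArg (fun L => L (EuclideanSpace.single i (1 : ℝ))) h1).symm

/-- The one-dimensional necessary condition. -/
lemma aux_deriv2_nonpos {φ : ℝ → ℝ} (hc : ContinuousAt φ 0) (hmax : IsLocalMax φ 0) :
    deriv (deriv φ) 0 ≤ 0 := by
  by_contra! h
  have h0 := hmax.deriv_eq_zero
  have hmin := isLocalMin_of_deriv_deriv_pos h h0 hc
  have hev : φ =ᶠ[nhds 0] fun _ => φ 0 := by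
    filter_upwards [hmax, hmin] with t h1 h2 using le_antisymm h1 h2
  have := hev.deriv.deriv_eq
  simp at this
  linarith

lemma aux_max_point {n : ℕ} {u : EuclideanSpace ℝ (Fin n) → ℝ}
    {x : EuclideanSpace ℝ (Fin n)} (hu : ContDiffAt ℝ 2 u x) (p : EuclideanSpace ℝ (Fin n))
    (hmax : IsLocalMax (fun y => u y - inner ℝ p y) x) :
    auxGrad n u x = p ∧ (-(hess n u x)).PosSemidef := by
  have hdu : DifferentiableAt ℝ u x := hu.differentiableAt (by norm_num)
  have hgr : ∀ h, fderiv ℝ u x h = inner ℝ p h := by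
    have h1 : HasFDerivAt (fun y => u y - inner ℝ p y) (fderiv ℝ u x - innerSL ℝ p) x :=
      hdu.hasFDerivAt.sub (innerSL ℝ p).hasFDerivAt
    have h2 := hmax.hasFDerivAt_eq_zero h1
    intro h
    have h3 := congrArg (fun L => L h) h2
    simp at h3
    linarith
  refine ⟨?_, ?_⟩
  · refine ext_inner_right ℝ (fun h => ?_)
    rw [← aux_grad_inner, hgr]
  · rw [Matrix.posSemidef_iff_dotProduct_mulVec]
    refine ⟨?_, fun h' => ?_⟩
    · ext i j
      simp only [Matrix.conjTranspose_apply, Matrix.neg_apply, star_trivial]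
      rw [aux_hess_symm hu]
    · set h : EuclideanSpace ℝ (Fin n) := WithLp.toLp 2 h' with hh
      have hq := aux_hess_quad hu h
      rw [Matrix.neg_mulVec, dotProduct_neg, star_trivial]
      change 0 ≤ - dotProduct h.ofLp ((hess n u x).mulVec h.ofLp)
      rw [hq]
      have hline : ∀ t : ℝ, HasDerivAt (fun t : ℝ => x + t • h) h t := fun t => by
        simpa using ((hasDerivAt_id t).smul_const h).const_add x
      have hcl : ContinuousAt (fun t : ℝ => x + t • h) 0 := (hline 0).continuousAt
      have hx0 : x + (0 : ℝ) • h = x := by simp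
      have htend : Filter.Tendsto (fun t : ℝ => x + t • h) (nhds 0) (nhds x) := by
        have := hcl.tendsto; rwa [hx0] at this
      set φ : ℝ → ℝ := fun t => u (x + t • h) - inner ℝ p (x + t • h) with hφ
      have hev : deriv φ =ᶠ[nhds 0] fun t => fderiv ℝ u (x + t • h) h - inner ℝ p h := by
        have hnear : ∀ᶠ y in nhds x, DifferentiableAt ℝ u y := by
          filter_upwards [hu.eventually (by norm_num)] with y hy
          exact hy.differentiableAt (by norm_num)
        filter_upwards [htend.eventually hnear] with t ht
        have h1 := ht.hasFDerivAt.comp_hasDerivAt t (hline t)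
        have h2 := (innerSL ℝ p).hasFDerivAt.comp_hasDerivAt t (hline t)
        exact (h1.sub h2).deriv
      have hd2 : deriv (deriv φ) 0 = fderiv ℝ (fderiv ℝ u) x h h := by
        rw [hev.deriv_eq]
        have h1 : HasFDerivAt (fderiv ℝ u) (fderiv ℝ (fderiv ℝ u) x) (x + (0 : ℝ) • h) := by
          rw [hx0]; exact (aux_diff_fderiv hu).hasFDerivAt
        have h2 := h1.comp_hasDerivAt 0 (hline 0)
        have h3 := (h2.clm_apply (hasDerivAt_const 0 h)).sub_const (inner ℝ p h)
        have h4 := h3.deriv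
        simpa using h4
      have hm : IsLocalMax φ 0 := by
        have := htend.eventually hmax
        simpa [IsLocalMax, IsMaxFilter, hφ] using this
      have hcφ : ContinuousAt φ 0 := by
        have h1 : ContinuousAt (fun y => u y - inner ℝ p y) (x + (0 : ℝ) • h) := by
          rw [hx0]
          exact hdu.continuousAt.sub (innerSL ℝ p).continuous.continuousAt
        exact ContinuousAt.comp (f := fun t : ℝ => x + t • h) h1 hcl
      have := aux_deriv2_nonpos hcφ hm
      linarith

/-! ### The Aleksandrov-Bakelman-Pucci estimate -/

/-- The contact set. -/
def auxGamma (n : ℕ) (v : EuclideanSpace ℝ (Fin n) → ℝ) (D : Set (EuclideanSpace ℝ (Fin n))) :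
    Set (EuclideanSpace ℝ (Fin n)) :=
  {x ∈ D | (-(hess n v x)).PosSemidef}

lemma aux_measurable_grad (n : ℕ) (v : EuclideanSpace ℝ (Fin n) → ℝ) :
    Measurable (auxGrad n v) := by
  unfold auxGrad
  refine (WithLp.measurable_toLp 2 _).comp ?_
  exact measurable_pi_lambda _ (fun j => measurable_fderiv_apply_const ℝ v _)

lemma aux_measurableSet_gamma (n : ℕ) (v : EuclideanSpace ℝ (Fin n) → ℝ)
    {D : Set (EuclideanSpace ℝ (Fin n))} (hD : IsOpen D) : MeasurableSet (auxGamma n v D) := by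
  have hm : Measurable (fun x => (fun i j => hess n v x i j : Fin n → Fin n → ℝ)) := by
    refine measurable_pi_lambda _ (fun i => measurable_pi_lambda _ (fun j => ?_))
    exact measurable_fderiv_apply_const ℝ _ _
  have hcl : IsClosed {M : Fin n → Fin n → ℝ | (-(Matrix.of M)).PosSemidef} := by
    have : {M : Fin n → Fin n → ℝ | (-(Matrix.of M)).PosSemidef} =
        {M | ∀ i j, M j i = M i j} ∩ {M | ∀ h : Fin n → ℝ, 0 ≤ - ∑ i, h i * ∑ j, M i j * h j} := by
      ext M
      simp only [Set.mem_ofPred_eq, Set.mem_inter_iff]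
      rw [Matrix.posSemidef_iff_dotProduct_mulVec]
      refine and_congr ?_ ?_
      · constructor
        · intro h i j
          have := congrFun (congrFun h i) j
          simpa using this
        · intro h
          ext i j
          simpa using h i j
      · simp [dotProduct, Matrix.mulVec]
    rw [this]
    refine IsClosed.inter ?_ ?_
    · simp only [Set.ofPred_forall]
      refine isClosed_iInter fun i => isClosed_iInter fun j => ?_
      exact isClosed_eq (by fun_prop) (by fun_prop)
    · simp only [Set.ofPred_forall]
      refine isClosed_iInter fun h => ?_
      exact isClosed_le (by fun_prop) (by fun_prop)
  exact hD.measurableSet.inter (hm hcl.measurableSet)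

/-- Measure estimate of one dyadic shell of gradients. -/
lemma aux_shell {n : ℕ} (hn : 1 ≤ n) {lam : ℝ} (hlam : 0 < lam)
    {D : Set (EuclideanSpace ℝ (Fin n))} (hD : IsOpen D)
    {v g b : EuclideanSpace ℝ (Fin n) → ℝ} (hv : ContDiffOn ℝ 2 v D)
    (hg : ∀ x ∈ D, 0 ≤ g x) (hb : ∀ x ∈ D, 0 ≤ b x)
    (hyp : ∀ x ∈ D, (-(hess n v x)).PosSemidef →
      lam * (-(hess n v x)).trace ≤ g x + b x * ‖fderiv ℝ v x‖)
    {μ s : ℝ} (hμ : 0 < μ) (hs : μ ≤ s)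
    (hcov : ∀ p : EuclideanSpace ℝ (Fin n), ‖p‖ < 2 * s → p ∈ auxGrad n v '' auxGamma n v D) :
    volume (Metric.ball (0 : EuclideanSpace ℝ (Fin n)) 1) ≤
      ∫⁻ x in auxGamma n v D ∩ {x | s ≤ ‖auxGrad n v x‖ ∧ ‖auxGrad n v x‖ < 2 * s},
        ENNReal.ofReal (((g x / μ + 2 * b x) / lam) ^ n) := by
  have hs0 : 0 < s := hμ.trans_le hs
  have : Nonempty (Fin n) := ⟨⟨0, by omega⟩⟩
  set S : Set (EuclideanSpace ℝ (Fin n)) := {x | s ≤ ‖auxGrad n v x‖ ∧ ‖auxGrad n v x‖ < 2 * s}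
    with hS
  have hmS : MeasurableSet S := by
    have hmn := (aux_measurable_grad n v).norm
    exact (measurableSet_le measurable_const hmn).inter (measurableSet_lt hmn measurable_const)
  have hmG := (aux_measurableSet_gamma n v hD).inter hmS
  have hat : ∀ x ∈ D, ContDiffAt ℝ 2 v x := fun x hx => hv.contDiffAt (hD.mem_nhds hx)
  have h1 := addHaar_image_le_lintegral_abs_det_fderiv (μ := volume) hmG
    (f := auxGrad n v) (f' := fun x => fderiv ℝ (auxGrad n v) x)
    (fun x hx => (aux_grad_hasFDerivAt (hat x hx.1.1)).1.hasFDerivWithinAt)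
  -- lower bound on the image
  have h2 : volume (Metric.ball (0 : EuclideanSpace ℝ (Fin n)) (2 * s) \ Metric.ball 0 s) ≤
      volume (auxGrad n v '' (auxGamma n v D ∩ S)) := by
    apply measure_mono
    rintro p ⟨hp1, hp2⟩
    simp only [Metric.mem_ball, dist_zero_right, not_lt] at hp1 hp2
    obtain ⟨x, hx, rfl⟩ := hcov p hp1
    exact ⟨x, ⟨hx, hp2, hp1⟩, rfl⟩
  have h3 : ENNReal.ofReal (s ^ n) * volume (Metric.ball (0 : EuclideanSpace ℝ (Fin n)) 1) ≤
      volume (Metric.ball (0 : EuclideanSpace ℝ (Fin n)) (2 * s) \ Metric.ball 0 s) := by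
    rw [measure_sdiff (Metric.ball_subset_ball (by linarith)) measurableSet_ball.nullMeasurableSet
      measure_ball_lt_top.ne,
      Measure.addHaar_ball volume (0 : EuclideanSpace ℝ (Fin n)) (by linarith : 0 ≤ 2 * s),
      Measure.addHaar_ball volume (0 : EuclideanSpace ℝ (Fin n)) hs0.le]
    simp only [finrank_euclideanSpace, Fintype.card_fin]
    rw [← ENNReal.sub_mul (fun _ _ => measure_ball_lt_top.ne), ← ENNReal.ofReal_sub _ (by positivity)]
    gcongr
    rw [mul_pow]
    have : (2 : ℝ) ≤ 2 ^ n := by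
      calc (2 : ℝ) = 2 ^ 1 := by norm_num
        _ ≤ 2 ^ n := pow_le_pow_right₀ (by norm_num) hn
    nlinarith [pow_pos hs0 n]
  have h4 : ∫⁻ x in auxGamma n v D ∩ S, ENNReal.ofReal |(fderiv ℝ (auxGrad n v) x).det| ≤
      ∫⁻ x in auxGamma n v D ∩ S, ENNReal.ofReal (s ^ n) *
        ENNReal.ofReal (((g x / μ + 2 * b x) / lam) ^ n) := by
    apply setLIntegral_mono' hmG
    rintro x ⟨⟨hxD, hxP⟩, hx1, hx2⟩
    rw [← ENNReal.ofReal_mul (by positivity), (aux_grad_hasFDerivAt (hat x hxD)).2, ← mul_pow]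
    apply ENNReal.ofReal_le_ofReal
    have e1 : |(hess n v x).det| = (-(hess n v x)).det := by
      rw [← abs_of_nonneg hxP.det_nonneg, Matrix.det_neg, abs_mul, abs_pow]
      simp
    rw [e1]
    refine (aux_det_le_trace_pow hxP).trans ?_
    apply pow_le_pow_left₀ hxP.trace_nonneg
    have e2 := hyp x hxD hxP
    have e3 : ‖fderiv ℝ v x‖ ≤ 2 * s := (aux_norm_fderiv_le v x).trans hx2.le
    have e4 : b x * ‖fderiv ℝ v x‖ ≤ b x * (2 * s) := mul_le_mul_of_nonneg_left e3 (hb x hxD)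
    have e5 : g x ≤ s * (g x / μ) := by
      rw [mul_div_assoc', le_div_iff₀ hμ]
      nlinarith [hg x hxD]
    rw [mul_div_assoc', le_div_iff₀ hlam]
    nlinarith
  rw [lintegral_const_mul' _ _ ENNReal.ofReal_ne_top] at h4
  have h5 := (h3.trans h2).trans (h1.trans h4)
  have hne : ENNReal.ofReal (s ^ n) ≠ 0 := by simp; positivity
  exact (ENNReal.mul_le_mul_iff_right hne ENNReal.ofReal_ne_top).1 h5

/-- The constant `C` is admissible in the ABP estimate. -/
def auxABP (n : ℕ) (lam Kb C : ℝ) : Prop :=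
  ∀ (D Kc : Set (EuclideanSpace ℝ (Fin n)))
      (v g b : EuclideanSpace ℝ (Fin n) → ℝ) (d μ : ℝ),
      IsOpen D → D ⊆ Kc → IsCompact Kc → ContinuousOn v Kc → ContDiffOn ℝ 2 v D →
      (∀ x ∈ Kc, x ∉ D → v x ≤ 0) → (∀ x ∈ Kc, ∀ y ∈ Kc, dist x y ≤ d) → 0 < d →
      ContinuousOn g D → 
      (∀ x ∈ D, 0 ≤ g x) → (∀ x ∈ D, 0 ≤ b x) →
      (∀ x ∈ D, (-(hess n v x)).PosSemidef →
        lam * (-(hess n v x)).trace ≤ g x + b x * ‖fderiv ℝ v x‖) →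
      0 < μ →
      ∫⁻ x in D, ENNReal.ofReal (g x ^ n) ≤ ENNReal.ofReal (μ ^ n) →
      ∫⁻ x in D, ENNReal.ofReal (b x ^ n) ≤ ENNReal.ofReal Kb →
      ∀ x ∈ D, v x ≤ C * d * μ

lemma aux_abp (n : ℕ) (hn : 1 ≤ n) (lam : ℝ) (hlam : 0 < lam) (Kb : ℝ) :
    ∃ C : ℝ, 0 < C ∧ auxABP n lam Kb C := by
  have : Nonempty (Fin n) := ⟨⟨0, by omega⟩⟩
  set ω := (volume (Metric.ball (0 : EuclideanSpace ℝ (Fin n)) 1)) with hω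
  have hω0 : ω ≠ 0 := (Metric.measure_ball_pos volume _ one_pos).ne'
  have hωt : ω ≠ ⊤ := measure_ball_lt_top.ne
  set T : ℝ≥0∞ := ENNReal.ofReal ((2 / lam) ^ n) * (1 + ENNReal.ofReal (2 ^ n) * ENNReal.ofReal Kb)
    with hT
  have hTt : T ≠ ⊤ := by
    rw [hT]
    exact ENNReal.mul_ne_top ENNReal.ofReal_ne_top (ENNReal.add_ne_top.2 ⟨ENNReal.one_ne_top,
      ENNReal.mul_ne_top ENNReal.ofReal_ne_top ENNReal.ofReal_ne_top⟩)
  obtain ⟨N, hN⟩ := ENNReal.exists_nat_mul_gt hω0 hTt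
  refine ⟨2 ^ N, by positivity, ?_⟩
  intro D Kc v g b d μ hD hDK hKc hvc hv hvb hd hd0 hgc hg hb hyp hμ hgi hbi x hx
  by_contra! hlt
  obtain ⟨xm, hxm, hmax⟩ := hKc.exists_isMaxOn ⟨x, hDK hx⟩ hvc
  have hM : 2 ^ N * μ * d < v xm := by
    have : v x ≤ v xm := hmax (hDK hx)
    linarith
  have hcov : ∀ p : EuclideanSpace ℝ (Fin n), ‖p‖ < 2 ^ N * μ →
      p ∈ auxGrad n v '' auxGamma n v D := by
    intro p hp
    have hpc : ContinuousOn (fun y => v y - inner ℝ p y) Kc :=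
      hvc.sub (innerSL ℝ p).continuous.continuousOn
    obtain ⟨y, hy, hymax⟩ := hKc.exists_isMaxOn ⟨x, hDK hx⟩ hpc
    have h1 : v xm - inner ℝ p xm ≤ v y - inner ℝ p y := hymax hxm
    have h2 : v y ≥ v xm - ‖p‖ * d := by
      have h3 : inner ℝ p xm - inner ℝ p y = inner ℝ p (xm - y) := by rw [inner_sub_right]
      have h4 : inner ℝ p (xm - y) ≤ ‖p‖ * ‖xm - y‖ := real_inner_le_norm _ _
      have h5 : ‖xm - y‖ ≤ d := by rw [← dist_eq_norm]; exact hd _ hxm _ hy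
      have h6 : ‖p‖ * ‖xm - y‖ ≤ ‖p‖ * d := mul_le_mul_of_nonneg_left h5 (norm_nonneg _)
      linarith
    have hyD : y ∈ D := by
      by_contra hyD
      have := hvb y hy hyD
      have h7 : ‖p‖ * d < 2 ^ N * μ * d := mul_lt_mul_of_pos_right hp hd0
      linarith
    have hloc : IsLocalMax (fun y => v y - inner ℝ p y) y :=
      (hymax.on_subset hDK).isLocalMax (hD.mem_nhds hyD)
    obtain ⟨h8, h9⟩ := aux_max_point (hv.contDiffAt (hD.mem_nhds hyD)) p hloc
    exact ⟨y, ⟨hyD, h9⟩, h8⟩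
  set G : EuclideanSpace ℝ (Fin n) → ℝ≥0∞ :=
    fun x => ENNReal.ofReal (((g x / μ + 2 * b x) / lam) ^ n) with hG
  set S : ℕ → Set (EuclideanSpace ℝ (Fin n)) := fun k => auxGamma n v D ∩
    {x | 2 ^ k * μ ≤ ‖auxGrad n v x‖ ∧ ‖auxGrad n v x‖ < 2 * (2 ^ k * μ)} with hS
  have hmS : ∀ k, MeasurableSet (S k) := fun k => by
    have hmn := (aux_measurable_grad n v).norm
    exact (aux_measurableSet_gamma n v hD).inter
      ((measurableSet_le measurable_const hmn).inter (measurableSet_lt hmn measurable_const))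
  have hshell : ∀ k < N, ω ≤ ∫⁻ x in S k, G x := by
    intro k hk
    refine aux_shell hn hlam hD hv hg hb hyp hμ ?_ ?_
    · have : (1 : ℝ) ≤ 2 ^ k := one_le_pow₀ (by norm_num)
      nlinarith
    · intro p hp
      apply hcov
      have : (2 : ℝ) ^ (k + 1) ≤ 2 ^ N := pow_le_pow_right₀ (by norm_num) hk
      rw [pow_succ] at this
      nlinarith
  have hdisj : Pairwise (Function.onFun Disjoint S) := by
    have key : ∀ i j, i < j → Disjoint (S i) (S j) := by
      intro i j hij
      rw [Set.disjoint_left]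
      rintro y ⟨-, -, h1⟩ ⟨-, h2, -⟩
      have : (2 : ℝ) ^ (i + 1) ≤ 2 ^ j := pow_le_pow_right₀ (by norm_num) hij
      rw [pow_succ] at this
      nlinarith
    intro i j hij
    rcases lt_or_gt_of_ne hij with h | h
    · exact key i j h
    · exact (key j i h).symm
  have hsum : (N : ℝ≥0∞) * ω ≤ ∫⁻ x in D, G x := by
    calc (N : ℝ≥0∞) * ω = ∑ k ∈ Finset.range N, ω := by simp
      _ ≤ ∑ k ∈ Finset.range N, ∫⁻ x in S k, G x :=
          Finset.sum_le_sum (fun k hk => hshell k (Finset.mem_range.1 hk))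
      _ = ∫⁻ x in ⋃ k ∈ Finset.range N, S k, G x :=
          (lintegral_biUnion_finset (fun i _ j _ hij => hdisj hij) (fun k _ => hmS k) _).symm
      _ ≤ ∫⁻ x in D, G x := by
          apply lintegral_mono_set
          intro y hy
          simp only [Set.mem_iUnion] at hy
          obtain ⟨k, -, hk⟩ := hy
          exact hk.1.1
  have hGle : ∫⁻ x in D, G x ≤ T := by
    have h1 : ∫⁻ x in D, G x ≤ ∫⁻ x in D, ENNReal.ofReal ((2 / lam) ^ n) *
        (ENNReal.ofReal ((μ ^ n)⁻¹) * ENNReal.ofReal (g x ^ n) +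
          ENNReal.ofReal (2 ^ n) * ENNReal.ofReal (b x ^ n)) := by
      apply setLIntegral_mono' hD.measurableSet
      intro y hy
      have gy := hg y hy
      have by' := hb y hy
      rw [hG, ← ENNReal.ofReal_mul (by positivity), ← ENNReal.ofReal_mul (by positivity),
        ← ENNReal.ofReal_add (by positivity) (by positivity),
        ← ENNReal.ofReal_mul (by positivity)]
      apply ENNReal.ofReal_le_ofReal
      have h2 := add_pow_le (by positivity : 0 ≤ g y / μ) (by positivity : 0 ≤ 2 * b y) n
      have h3 : (2 : ℝ) ^ (n - 1) ≤ 2 ^ n := pow_le_pow_right₀ (by norm_num) (by omega)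
      rw [div_pow, div_pow, div_mul_eq_mul_div]
      gcongr
      refine h2.trans ?_
      have e : (μ ^ n)⁻¹ * g y ^ n + 2 ^ n * b y ^ n = (g y / μ) ^ n + (2 * b y) ^ n := by
        rw [div_pow, mul_pow]; field_simp
      rw [e]
      gcongr
    refine h1.trans ?_
    rw [lintegral_const_mul' _ _ ENNReal.ofReal_ne_top, lintegral_add_left',
      lintegral_const_mul' _ _ ENNReal.ofReal_ne_top, lintegral_const_mul' _ _ ENNReal.ofReal_ne_top]
    · rw [hT]
      gcongr
      calc ENNReal.ofReal ((μ ^ n)⁻¹) * ∫⁻ x in D, ENNReal.ofReal (g x ^ n)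
          ≤ ENNReal.ofReal ((μ ^ n)⁻¹) * ENNReal.ofReal (μ ^ n) := by gcongr
        _ = 1 := by
          rw [← ENNReal.ofReal_mul (by positivity), inv_mul_cancel₀ (by positivity)]; simp
    · refine AEMeasurable.const_mul ?_ _
      exact ((hgc.pow n).aemeasurable hD.measurableSet).ennreal_ofReal
  exact absurd (hsum.trans hGle) (not_le.2 hN)

/-! ### Hölder inequality -/

lemma aux_LpNormE_eq (n : ℕ) (p : ℝ) (hp : 0 < p) (g : EuclideanSpace ℝ (Fin n) → ℝ)
    (E : Set (EuclideanSpace ℝ (Fin n))) :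
    LpNormE n p g E = eLpNorm' g p (volume.restrict E) := by
  unfold LpNormE eLpNorm'
  congr 1
  apply lintegral_congr
  intro x
  rw [← ENNReal.ofReal_rpow_of_nonneg (abs_nonneg _) hp.le, Real.enorm_eq_ofReal_abs]

/-- The Hölder inequality on subsets of balls, in the form we need. -/
lemma aux_holder {n : ℕ} (hn : 1 ≤ n) {q : ℝ} (hq : (n : ℝ) ≤ q)
    {g : EuclideanSpace ℝ (Fin n) → ℝ} {D E : Set (EuclideanSpace ℝ (Fin n))}
    (hD : IsOpen D) (hDE : D ⊆ E) (hg : ContinuousOn g D) (hg0 : ∀ x ∈ D, 0 ≤ g x)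
    {X : ℝ} (hX : 0 ≤ X) (hgX : LpNormE n q g E ≤ ENNReal.ofReal X)
    {z : EuclideanSpace ℝ (Fin n)} {r : ℝ} (hr : 0 < r) (hDr : D ⊆ Metric.ball z r) :
    ∫⁻ x in D, ENNReal.ofReal (g x ^ n) ≤ ENNReal.ofReal
      ((X * ((volume (Metric.ball (0 : EuclideanSpace ℝ (Fin n)) 1)).toReal ^ (1 / (n : ℝ) - 1 / q)
        * r ^ (1 - n / q))) ^ n) := by
  have : Nonempty (Fin n) := ⟨⟨0, by omega⟩⟩
  have hn0 : (0 : ℝ) < n := by exact_mod_cast hn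
  have hq0 : 0 < q := hn0.trans_le hq
  set w := (volume (Metric.ball (0 : EuclideanSpace ℝ (Fin n)) 1)).toReal with hw
  have hw0 : 0 ≤ w := ENNReal.toReal_nonneg
  have hexp : 0 ≤ 1 / (n : ℝ) - 1 / q := by
    rw [sub_nonneg]; exact one_div_le_one_div_of_le hn0 hq
  have hvol : volume D ≤ ENNReal.ofReal (r ^ n * w) := by
    refine (measure_mono hDr).trans ?_
    rw [Measure.addHaar_ball volume z hr.le, ENNReal.ofReal_mul (by positivity), hw,
      ENNReal.ofReal_toReal measure_ball_lt_top.ne]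
    simp
  have hms : AEStronglyMeasurable g (volume.restrict D) :=
    hg.aestronglyMeasurable hD.measurableSet
  have h1 := eLpNorm'_le_eLpNorm'_mul_rpow_measure_univ hn0 hq hms
  rw [Measure.restrict_apply_univ] at h1
  have h2 : eLpNorm' g q (volume.restrict D) ≤ ENNReal.ofReal X := by
    rw [← aux_LpNormE_eq n q hq0]
    refine le_trans ?_ hgX
    unfold LpNormE
    gcongr
  have h3 : volume D ^ (1 / (n : ℝ) - 1 / q) ≤
      ENNReal.ofReal (w ^ (1 / (n : ℝ) - 1 / q) * r ^ (1 - n / q)) := by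
    have e : w ^ (1 / (n : ℝ) - 1 / q) * r ^ (1 - n / q) = (r ^ n * w) ^ (1 / (n : ℝ) - 1 / q) := by
      rw [Real.mul_rpow (by positivity) hw0, mul_comm, ← Real.rpow_natCast r n,
        ← Real.rpow_mul hr.le]
      congr 2
      field_simp
    rw [e, ← ENNReal.ofReal_rpow_of_nonneg (by positivity) hexp]
    gcongr
  have h4 : eLpNorm' g n (volume.restrict D) ≤
      ENNReal.ofReal (X * (w ^ (1 / (n : ℝ) - 1 / q) * r ^ (1 - n / q))) := by
    rw [ENNReal.ofReal_mul hX]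
    exact h1.trans (mul_le_mul' h2 h3)
  have h5 : ∫⁻ x in D, ENNReal.ofReal (g x ^ n) = (eLpNorm' g n (volume.restrict D)) ^ n := by
    rw [← aux_LpNormE_eq n n hn0, LpNormE, ← ENNReal.rpow_natCast, ← ENNReal.rpow_mul,
      one_div_mul_cancel hn0.ne', ENNReal.rpow_one]
    apply setLIntegral_congr_fun hD.measurableSet
    intro x hx
    simp only [Real.rpow_natCast]
    rw [abs_of_nonneg (hg0 x hx)]
  rw [h5, ENNReal.ofReal_pow (by positivity)]
  gcongr

/-- Combination of two integral bounds. -/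
lemma aux_combine {n : ℕ} (hn : 1 ≤ n) {g b : EuclideanSpace ℝ (Fin n) → ℝ}
    {D : Set (EuclideanSpace ℝ (Fin n))} (hD : IsOpen D) (hgc : ContinuousOn g D)
    (hg0 : ∀ x ∈ D, 0 ≤ g x) (hb0 : ∀ x ∈ D, 0 ≤ b x) {X Y t : ℝ} (hX : 0 ≤ X) (hY : 0 ≤ Y)
    (ht : 0 ≤ t)
    (h1 : ∫⁻ x in D, ENNReal.ofReal (g x ^ n) ≤ ENNReal.ofReal (X ^ n))
    (h2 : ∫⁻ x in D, ENNReal.ofReal (b x ^ n) ≤ ENNReal.ofReal (Y ^ n)) :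
    ∫⁻ x in D, ENNReal.ofReal ((g x + t * b x) ^ n) ≤ ENNReal.ofReal ((2 * (X + t * Y)) ^ n) := by
  have h3 : ∫⁻ x in D, ENNReal.ofReal ((g x + t * b x) ^ n) ≤
      ∫⁻ x in D, ENNReal.ofReal (2 ^ (n - 1)) * (ENNReal.ofReal (g x ^ n) +
        ENNReal.ofReal (t ^ n) * ENNReal.ofReal (b x ^ n)) := by
    apply setLIntegral_mono' hD.measurableSet
    intro y hy
    have gy := hg0 y hy
    have by' := hb0 y hy
    rw [← ENNReal.ofReal_mul (by positivity),
      ← ENNReal.ofReal_add (by positivity) (by positivity),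
      ← ENNReal.ofReal_mul (by positivity)]
    apply ENNReal.ofReal_le_ofReal
    rw [← mul_pow t]
    exact add_pow_le gy (by positivity) n
  refine h3.trans ?_
  rw [lintegral_const_mul' _ _ ENNReal.ofReal_ne_top, lintegral_add_left',
      lintegral_const_mul' _ _ ENNReal.ofReal_ne_top]
  · calc _ ≤ ENNReal.ofReal (2 ^ (n - 1)) * (ENNReal.ofReal (X ^ n) +
        ENNReal.ofReal (t ^ n) * ENNReal.ofReal (Y ^ n)) := by gcongr
      _ = ENNReal.ofReal (2 ^ (n - 1) * (X ^ n + (t * Y) ^ n)) := by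
        rw [← ENNReal.ofReal_mul (by positivity),
          ← ENNReal.ofReal_add (by positivity) (by positivity),
          ← ENNReal.ofReal_mul (by positivity), mul_pow]
      _ ≤ _ := by
        apply ENNReal.ofReal_le_ofReal
        have e1 : X ^ n + (t * Y) ^ n ≤ (X + t * Y) ^ n :=
          pow_add_pow_le hX (by positivity) (by omega)
        have e2 : (2 : ℝ) ^ (n - 1) ≤ 2 ^ n := pow_le_pow_right₀ (by norm_num) (by omega)
        rw [mul_pow 2]
        exact mul_le_mul e2 e1 (by positivity) (by positivity)
  · exact ((hgc.pow n).aemeasurable hD.measurableSet).ennreal_ofReal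

/-! ### The quadratic barrier -/

/-- The quadratic barrier. -/
noncomputable def auxW {n : ℕ} (z : EuclideanSpace ℝ (Fin n)) (c1 c2 c3 : ℝ)
    (y : EuclideanSpace ℝ (Fin n)) : ℝ :=
  c1 * ‖y - z‖ ^ 2 + c2 * (1 - inner ℝ z y) + c3 * (1 - inner ℝ z y) ^ 2

lemma auxW_contDiff {n : ℕ} (z : EuclideanSpace ℝ (Fin n)) (c1 c2 c3 : ℝ) :
    ContDiff ℝ 2 (auxW z c1 c2 c3) := by
  unfold auxW
  have h1 : ContDiff ℝ 2 (fun y : EuclideanSpace ℝ (Fin n) => ‖y - z‖ ^ 2) :=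
    (contDiff_id.sub contDiff_const).norm_sq ℝ
  have h2 : ContDiff ℝ 2 (fun y : EuclideanSpace ℝ (Fin n) => (1 : ℝ) - inner ℝ z y) :=
    contDiff_const.sub (innerSL ℝ z).contDiff
  exact ((contDiff_const.mul h1).add (contDiff_const.mul h2)).add (contDiff_const.mul (h2.pow 2))

lemma auxW_hasFDerivAt {n : ℕ} (z : EuclideanSpace ℝ (Fin n)) (c1 c2 c3 : ℝ)
    (y : EuclideanSpace ℝ (Fin n)) :
    HasFDerivAt (auxW z c1 c2 c3)
      ((2 * c1) • innerSL ℝ (y - z) - (c2 + 2 * c3 * (1 - inner ℝ z y)) • innerSL ℝ z) y := by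
  have h1 : HasFDerivAt (fun y : EuclideanSpace ℝ (Fin n) => ‖y - z‖ ^ 2)
      (2 • innerSL ℝ (y - z)) y := by
    have := ((hasFDerivAt_id y).sub_const z).norm_sq
    simpa using this
  have h2 : HasFDerivAt (fun y : EuclideanSpace ℝ (Fin n) => (1 : ℝ) - inner ℝ z y)
      (-(innerSL ℝ z)) y := (innerSL ℝ z).hasFDerivAt.const_sub 1
  have h3 := ((h1.const_mul c1).add (h2.const_mul c2)).add ((h2.pow 2).const_mul c3)
  refine h3.congr_fderiv ?_
  ext h
  simp
  ring

lemma auxW_hess {n : ℕ} (z : EuclideanSpace ℝ (Fin n)) (c1 c2 B : ℝ)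
    (y : EuclideanSpace ℝ (Fin n)) :
    hess n (auxW z c1 c2 (-(B * c1))) y =
      (2 * c1) • ((1 : Matrix (Fin n) (Fin n) ℝ) - B • Matrix.vecMulVec z.ofLp z.ofLp) := by
  ext i j
  unfold hess
  have h1 : (fun y => fderiv ℝ (auxW z c1 c2 (-(B * c1))) y (EuclideanSpace.single j (1 : ℝ))) =
      fun y => (2 * c1) * (y j - z j) - (c2 + 2 * (-(B * c1)) * (1 - inner ℝ z y)) * z j := by
    funext y
    rw [(auxW_hasFDerivAt z c1 c2 (-(B * c1)) y).fderiv]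
    simp [EuclideanSpace.inner_single_right]
  rw [h1]
  have h2 : HasFDerivAt (fun y : EuclideanSpace ℝ (Fin n) => (1 : ℝ) - inner ℝ z y)
      (-(innerSL ℝ z)) y := (innerSL ℝ z).hasFDerivAt.const_sub 1
  have h3 : HasFDerivAt (fun y : EuclideanSpace ℝ (Fin n) => y j)
    (EuclideanSpace.proj j : EuclideanSpace ℝ (Fin n) →L[ℝ] ℝ) y :=
    (EuclideanSpace.proj j : EuclideanSpace ℝ (Fin n) →L[ℝ] ℝ).hasFDerivAt
  have h4 := ((h3.sub_const (z j)).const_mul (2 * c1)).sub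
    (((h2.const_mul (2 * (-(B * c1)))).const_add c2).mul_const (z j))
  have h5 : fderiv ℝ (fun y : EuclideanSpace ℝ (Fin n) => (2 * c1) * (y j - z j) -
    (c2 + 2 * (-(B * c1)) * (1 - inner ℝ z y)) * z j) y = _ := h4.fderiv
  rw [h5]
  simp [EuclideanSpace.inner_single_right, Matrix.vecMulVec_apply, Matrix.one_apply,
    eq_comm]
  split_ifs <;> ring

lemma aux_hess_sub {n : ℕ} {u w : EuclideanSpace ℝ (Fin n) → ℝ}
    {x : EuclideanSpace ℝ (Fin n)} (hu : ContDiffAt ℝ 2 u x) (hw : ContDiffAt ℝ 2 w x) :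
    hess n (fun y => u y - w y) x = hess n u x - hess n w x := by
  have hev : fderiv ℝ (fun y => u y - w y) =ᶠ[nhds x] fun y => fderiv ℝ u y - fderiv ℝ w y := by
    filter_upwards [hu.eventually (by norm_num), hw.eventually (by norm_num)] with y h1 h2
    exact fderiv_fun_sub (h1.differentiableAt (by norm_num)) (h2.differentiableAt (by norm_num))
  ext i j
  rw [Matrix.sub_apply, aux_hess_eq (hu.sub hw), aux_hess_eq hu, aux_hess_eq hw, hev.fderiv_eq,
    fderiv_fun_sub (aux_diff_fderiv hu) (aux_diff_fderiv hw)]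
  rfl

/-- One step of the boundary iteration. -/
lemma aux_step {n : ℕ} {lam Lam Kb C B : ℝ} (hlam : 0 < lam) (hLam : lam ≤ Lam)
    (hB : B = n * Lam / lam) (hC : 0 < C) (habp : auxABP n lam Kb C)
    {b f u : EuclideanSpace ℝ (Fin n) → ℝ}
    (hbc : ContinuousOn b (Metric.ball 0 1)) (hfc : ContinuousOn f (Metric.ball 0 1))
    (hb0 : ∀ x ∈ Metric.ball (0 : EuclideanSpace ℝ (Fin n)) 1, 0 ≤ b x)
    (huc : ContinuousOn u (Metric.closedBall 0 1)) (hu2 : ContDiffOn ℝ 2 u (Metric.ball 0 1))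
    (heq : ∀ x ∈ Metric.ball (0 : EuclideanSpace ℝ (Fin n)) 1,
      -f x ≤ pucciPlus n lam Lam (hess n u x) + b x * gradNorm n u x)
    (hbd : ∀ x ∈ Metric.sphere (0 : EuclideanSpace ℝ (Fin n)) 1, u x ≤ 0)
    {z : EuclideanSpace ℝ (Fin n)} (hz : ‖z‖ = 1) {r a m μ : ℝ} (hr : 0 < r) (ha : 0 ≤ a)
    (hm : 0 ≤ m) (hμ : 0 < μ)
    (hind : ∀ y : EuclideanSpace ℝ (Fin n), ‖y‖ ≤ 1 → ‖y - z‖ ≤ r →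
      u y ≤ a * (1 - inner ℝ z y) + m * r)
    (hgi : ∫⁻ x in Metric.ball 0 1 ∩ Metric.ball z r,
      ENNReal.ofReal ((max (f x) 0 + (a + m * (2 + 3 * B)) * b x) ^ n) ≤ ENNReal.ofReal (μ ^ n))
    (hbi : ∫⁻ x in Metric.ball 0 1 ∩ Metric.ball z r,
      ENNReal.ofReal (b x ^ n) ≤ ENNReal.ofReal Kb) :
    ∀ y : EuclideanSpace ℝ (Fin n), ‖y‖ ≤ 1 → ‖y - z‖ ≤ r / 2 →
      u y ≤ (a + B * m) * (1 - inner ℝ z y) + m * r / 4 + C * (2 * r) * μ := by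
  have hB0 : 0 ≤ B := by
    rw [hB]
    have : 0 ≤ Lam := hlam.le.trans hLam
    positivity
  have hl0 : ∀ y : EuclideanSpace ℝ (Fin n), ‖y‖ ≤ 1 → 0 ≤ 1 - inner ℝ z y := by
    intro y hy
    have := real_inner_le_norm z y
    rw [hz, one_mul] at this
    linarith
  have hl1 : ∀ y : EuclideanSpace ℝ (Fin n), 1 - inner ℝ z y ≤ ‖y - z‖ := by
    intro y
    have h1 : inner ℝ z (z - y) ≤ ‖z‖ * ‖z - y‖ := real_inner_le_norm _ _
    rw [inner_sub_right, real_inner_self_eq_norm_sq, hz, norm_sub_rev] at h1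
    linarith
  set D : Set (EuclideanSpace ℝ (Fin n)) := Metric.ball 0 1 ∩ Metric.ball z r with hD
  set Kc : Set (EuclideanSpace ℝ (Fin n)) := Metric.closedBall 0 1 ∩ Metric.closedBall z r with hKc
  set w := auxW z (m / r) (a + B * m) (-(B * (m / r))) with hw
  set v : EuclideanSpace ℝ (Fin n) → ℝ := fun y => u y - w y with hv
  have hwle : ∀ y, w y = (m / r) * ‖y - z‖ ^ 2 + (a + B * m) * (1 - inner ℝ z y)
      - (B * (m / r)) * (1 - inner ℝ z y) ^ 2 := fun y => by rw [hw, auxW]; ring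
  have hmr : m / r * r = m := by field_simp
  have hmr0 : 0 ≤ m / r := by positivity
  -- lower bound of the barrier
  have hwge : ∀ y, ‖y‖ ≤ 1 → ‖y - z‖ ≤ r →
      (m / r) * ‖y - z‖ ^ 2 + a * (1 - inner ℝ z y) ≤ w y := by
    intro y hy1 hy2
    rw [hwle]
    have h1 := hl0 y hy1
    have h2 := (hl1 y).trans hy2
    have h3 : B * (m / r) * (1 - inner ℝ z y) ^ 2 ≤ B * m * (1 - inner ℝ z y) := by
      have : B * m * (1 - inner ℝ z y) = B * (m / r) * (1 - inner ℝ z y) * r := by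
        rw [← hmr]; field_simp
      rw [this, sq, ← mul_assoc]
      gcongr
    linarith
  have hDo : IsOpen D := Metric.isOpen_ball.inter Metric.isOpen_ball
  have hDB : D ⊆ Metric.ball 0 1 := Set.inter_subset_left
  have hDK : D ⊆ Kc := Set.inter_subset_inter Metric.ball_subset_closedBall
    Metric.ball_subset_closedBall
  have hwC := auxW_contDiff z (m / r) (a + B * m) (-(B * (m / r)))
  have huat : ∀ x ∈ D, ContDiffAt ℝ 2 u x := fun x hx =>
    hu2.contDiffAt (Metric.isOpen_ball.mem_nhds (hDB hx))
  have hmain := habp D Kc v (fun x => max (f x) 0 + (a + m * (2 + 3 * B)) * b x) b (2 * r) μ hDo hDK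
    ((isCompact_closedBall _ _).inter_right Metric.isClosed_closedBall)
    ((huc.mono Set.inter_subset_left).sub hwC.continuous.continuousOn)
    ((hu2.mono hDB).sub hwC.contDiffOn) ?_ ?_ (by positivity) ?_ ?_ (fun x hx => hb0 x (hDB hx))
    ?_ hμ hgi hbi
  · intro y hy1 hy2
    by_cases hyD : y ∈ D
    · have h1 := hmain y hyD
      have h2 : w y ≤ (a + B * m) * (1 - inner ℝ z y) + m * r / 4 := by
        rw [hwle]
        have h3 : (m / r) * ‖y - z‖ ^ 2 ≤ (m / r) * (r / 2) ^ 2 := by gcongr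
        have h4 : (m / r) * (r / 2) ^ 2 = m * r / 4 := by field_simp; norm_num
        have h5 : 0 ≤ (B * (m / r)) * (1 - inner ℝ z y) ^ 2 := by positivity
        linarith
      simp only [hv] at h1
      linarith
    · have hys : y ∈ Metric.sphere (0 : EuclideanSpace ℝ (Fin n)) 1 := by
        have : ¬ ‖y‖ < 1 := by
          intro h
          apply hyD
          refine ⟨by simpa using h, ?_⟩
          rw [Metric.mem_ball, dist_eq_norm]; linarith
        simp only [mem_sphere_iff_norm, sub_zero]
        linarith
      have h1 := hbd y hys
      have h2 := hl0 y hy1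
      have : 0 ≤ (a + B * m) * (1 - inner ℝ z y) + m * r / 4 + C * (2 * r) * μ := by positivity
      linarith
  · -- boundary values
    rintro y ⟨hy1, hy2⟩ hyD
    have hy1' : ‖y‖ ≤ 1 := by simpa using hy1
    have hy2' : ‖y - z‖ ≤ r := by rwa [Metric.mem_closedBall, dist_eq_norm] at hy2
    have h1 := hwge y hy1' hy2'
    have h2 := hl0 y hy1'
    simp only [hv]
    by_cases hlt : ‖y‖ < 1
    · have h3 : ‖y - z‖ = r := by
        refine le_antisymm hy2' ?_
        by_contra! h
        exact hyD ⟨by simpa using hlt, by rwa [Metric.mem_ball, dist_eq_norm]⟩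
      have h4 := hind y hy1' hy2'
      have h5 : (m / r) * ‖y - z‖ ^ 2 = m * r := by rw [h3]; field_simp
      linarith
    · have h3 := hbd y (by simp only [mem_sphere_iff_norm, sub_zero]; linarith)
      have : 0 ≤ (m / r) * ‖y - z‖ ^ 2 + a * (1 - inner ℝ z y) := by positivity
      linarith
  · -- diameter
    rintro x ⟨-, hx⟩ y ⟨-, hy⟩
    have := dist_triangle_right x y z
    rw [Metric.mem_closedBall] at hx hy
    linarith
  · exact ((hfc.mono hDB).sup continuousOn_const).add (continuousOn_const.mul (hbc.mono hDB))
  · intro x hx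
    have := hb0 x (hDB hx)
    have := le_max_right (f x) 0
    positivity
  · -- differential inequality
    intro x hx hP
    have hxn : ‖x‖ ≤ 1 := by simpa using Metric.ball_subset_closedBall (hDB hx)
    have hxz : ‖x - z‖ ≤ r := by
      have := hx.2; rw [Metric.mem_ball, dist_eq_norm] at this; exact this.le
    have hb := hb0 x (hDB hx)
    have h1 := aux_hess_sub (huat x hx) hwC.contDiffAt
    have h2 : hess n u x = hess n w x - (-(hess n v x)) := by
      rw [hv, hw, h1]; abel
    have h3 := aux_pucci_le hLam h2 hP (fun A hA1 hA2 => by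
      rw [hw, auxW_hess]
      exact aux_barrier_trace hlam z hz _ B (by positivity) hB hB0 A hA1 hA2)
    have h4 := heq x (hDB hx)
    have h5 : gradNorm n u x ≤ ‖fderiv ℝ v x‖ + (a + m * (2 + 3 * B)) := by
      have e1 : fderiv ℝ v x = fderiv ℝ u x - fderiv ℝ w x :=
        fderiv_fun_sub ((huat x hx).differentiableAt (by norm_num))
          (hwC.differentiable (by norm_num)).differentiableAt
      have e2 : ‖fderiv ℝ w x‖ ≤ a + m * (2 + 3 * B) := by
        rw [hw, (auxW_hasFDerivAt z _ _ _ x).fderiv]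
        have l0 := hl0 x hxn
        have l1 := (hl1 x).trans hxz
        have k1 : ‖(2 * (m / r)) • innerSL ℝ (x - z)‖ ≤ 2 * m := by
          rw [norm_smul, innerSL_apply_norm, Real.norm_of_nonneg (by positivity)]
          calc 2 * (m / r) * ‖x - z‖ ≤ 2 * (m / r) * r := by gcongr
            _ = 2 * m := by rw [mul_assoc, hmr]
        have k3 : B * (m / r) * (1 - inner ℝ z x) ≤ B * m := by
          calc B * (m / r) * (1 - inner ℝ z x) ≤ B * (m / r) * r := by gcongr
            _ = B * m := by rw [mul_assoc, hmr]
        have k4 : 0 ≤ B * (m / r) * (1 - inner ℝ z x) := by positivity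
        have k5 : 0 ≤ B * m := by positivity
        have k2 : ‖(a + B * m + 2 * -(B * (m / r)) * (1 - inner ℝ z x)) • innerSL ℝ z‖
            ≤ a + 3 * (B * m) := by
          rw [norm_smul, innerSL_apply_norm, hz, mul_one, Real.norm_eq_abs, abs_le]
          constructor <;> nlinarith
        refine (norm_sub_le _ _).trans ?_
        linarith
      have e3 : gradNorm n u x = ‖fderiv ℝ v x + fderiv ℝ w x‖ := by
        rw [e1, gradNorm]; congr 1; abel
      rw [e3]
      exact (norm_add_le _ _).trans (by linarith)
    have h6 : b x * gradNorm n u x ≤ b x * (‖fderiv ℝ v x‖ + (a + m * (2 + 3 * B))) :=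
      mul_le_mul_of_nonneg_left h5 hb
    have h7 := le_max_left (f x) 0
    linarith

/-! ### The iteration -/

set_option maxHeartbeats 4000000 in
lemma aux_main_real
    (n : ℕ) (hn : 2 ≤ n) (lam Lam : ℝ) (hlam : 0 < lam) (hLam : lam ≤ Lam)
    (p q d0 K : ℝ) (hq : (n : ℝ) < q) (hp : (n : ℝ) ≤ p)
    (hd0 : 0 < d0) (hd0' : d0 ≤ 1 / 4) (hK : 0 < K) :
    ∃ C : ℝ, 0 < C ∧
      ∀ b f u : EuclideanSpace ℝ (Fin n) → ℝ,
        ContinuousOn b (Metric.ball 0 1) →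
        ContinuousOn f (Metric.ball 0 1) →
        (∀ x ∈ Metric.ball (0 : EuclideanSpace ℝ (Fin n)) 1, 0 ≤ b x) →
        LpNormE n q b (Metric.ball 0 1) ≤ ENNReal.ofReal K →
        ContinuousOn u (Metric.closedBall 0 1) →
        ContDiffOn ℝ 2 u (Metric.ball 0 1) →
        (∀ x ∈ Metric.ball (0 : EuclideanSpace ℝ (Fin n)) 1,
          -f x ≤ pucciPlus n lam Lam (hess n u x) + b x * gradNorm n u x) →
        (∀ x ∈ Metric.sphere (0 : EuclideanSpace ℝ (Fin n)) 1, u x ≤ 0) →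
        ∀ FP FQ : ℝ, 0 < FP → 0 < FQ →
        LpNormE n p (fun y => max (f y) 0) (Metric.ball 0 1) ≤ ENNReal.ofReal FP →
        LpNormE n q (fun y => max (f y) 0)
          {y ∈ Metric.ball (0 : EuclideanSpace ℝ (Fin n)) 1 | 1 - ‖y‖ < d0} ≤ ENNReal.ofReal FQ →
        ∀ x ∈ Metric.ball (0 : EuclideanSpace ℝ (Fin n)) 1,
          u x ≤ C * (FP + FQ) * (1 - ‖x‖) := by
  have hn1 : 1 ≤ n := by omega
  have : Nonempty (Fin n) := ⟨⟨0, by omega⟩⟩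
  have hn0 : (0 : ℝ) < n := by exact_mod_cast hn1
  have hn1' : (1 : ℝ) ≤ n := by exact_mod_cast hn1
  have hq0 : 0 < q := hn0.trans hq
  obtain ⟨w, hw⟩ : ∃ w, w = (volume (Metric.ball (0 : EuclideanSpace ℝ (Fin n)) 1)).toReal :=
    ⟨_, rfl⟩
  have hw0 : 0 < w := by
    rw [hw]
    exact ENNReal.toReal_pos (Metric.measure_ball_pos volume _ one_pos).ne' measure_ball_lt_top.ne
  obtain ⟨W, hW⟩ : ∃ W, W = w ^ (1 / (n : ℝ) - 1 / q) := ⟨_, rfl⟩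
  obtain ⟨Wp, hWp⟩ : ∃ Wp, Wp = w ^ (1 / (n : ℝ) - 1 / p) := ⟨_, rfl⟩
  have hW0 : 0 < W := by rw [hW]; positivity
  have hWp0 : 0 < Wp := by rw [hWp]; positivity
  obtain ⟨α, hα⟩ : ∃ α, α = 1 - (n : ℝ) / q := ⟨_, rfl⟩
  have hα0 : 0 < α := by
    rw [hα, sub_pos, div_lt_one hq0]; exact hq
  obtain ⟨B, hB⟩ : ∃ B, B = n * Lam / lam := ⟨_, rfl⟩
  have hB1 : 1 ≤ B := by
    rw [hB, le_div_iff₀ hlam]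
    nlinarith
  obtain ⟨C0, hC0, habp⟩ := aux_abp n hn1 lam hlam ((K * W) ^ n)
  obtain ⟨E, hE⟩ : ∃ E, E = 32 * B * C0 * W * (1 + 2 * K) := ⟨_, rfl⟩
  have hE0 : 0 < E := by rw [hE]; positivity
  obtain ⟨s, hs⟩ : ∃ s : ℝ, s = (1 / 2 : ℝ) ^ α := ⟨_, rfl⟩
  have hs0 : 0 < s := by rw [hs]; positivity
  have hs1 : s < 1 := by rw [hs]; exact Real.rpow_lt_one (by norm_num) (by norm_num) hα0
  obtain ⟨H, hH⟩ : ∃ H, H = Real.exp (E * (1 - s)⁻¹) := ⟨_, rfl⟩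
  have hH1 : 1 ≤ H := by
    rw [hH]
    apply Real.one_le_exp
    have : 0 < 1 - s := by linarith
    positivity
  refine ⟨H * (8 * B * C0 * Wp / d0 + 1), by positivity, ?_⟩
  intro b f u hbc hfc hb0 hbK huc hu2 heq hbd FP FQ hFP hFQ hfp hfq x hx
  have hfmc : ContinuousOn (fun y => max (f y) 0) (Metric.ball 0 1) := hfc.sup continuousOn_const
  have hbi1 : ∫⁻ x in Metric.ball (0 : EuclideanSpace ℝ (Fin n)) 1, ENNReal.ofReal (b x ^ n)
      ≤ ENNReal.ofReal ((K * W) ^ n) := by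
    have := aux_holder hn1 hq.le Metric.isOpen_ball (subset_refl _) hbc hb0 hK.le hbK one_pos
      (subset_refl _)
    rw [← hw, ← hW, Real.one_rpow, mul_one] at this
    exact this
  have hfi1 : ∫⁻ x in Metric.ball (0 : EuclideanSpace ℝ (Fin n)) 1,
      ENNReal.ofReal (max (f x) 0 ^ n) ≤ ENNReal.ofReal ((FP * Wp) ^ n) := by
    have := aux_holder hn1 hp Metric.isOpen_ball (subset_refl _) hfmc
      (fun x _ => le_max_right _ _) hFP.le hfp one_pos (subset_refl _)
    rw [← hw, ← hWp, Real.one_rpow, mul_one] at this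
    exact this
  obtain ⟨M, hM⟩ : ∃ M, M = C0 * 2 * (FP * Wp) := ⟨_, rfl⟩
  have hM0 : 0 < M := by rw [hM]; positivity
  -- global bound
  have hglob : ∀ y ∈ Metric.closedBall (0 : EuclideanSpace ℝ (Fin n)) 1, u y ≤ M := by
    have hmain := habp (Metric.ball 0 1) (Metric.closedBall 0 1) u (fun x => max (f x) 0) b 2
      (FP * Wp) Metric.isOpen_ball Metric.ball_subset_closedBall (isCompact_closedBall _ _)
      huc hu2 ?_ ?_ (by norm_num) hfmc (fun x _ => le_max_right _ _) hb0 ?_ (by positivity)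
      hfi1 hbi1
    · intro y hy
      by_cases hyb : y ∈ Metric.ball (0 : EuclideanSpace ℝ (Fin n)) 1
      · rw [hM]; exact hmain y hyb
      · have : u y ≤ 0 := hbd y (by
          simp only [Metric.mem_closedBall, Metric.mem_ball, Metric.mem_sphere, not_lt] at *
          exact le_antisymm hy hyb)
        linarith
    · intro y hy hyb
      exact hbd y (by
        simp only [Metric.mem_closedBall, Metric.mem_ball, Metric.mem_sphere, not_lt] at *
        exact le_antisymm hy hyb)
    · intro y hy y' hy'
      have := dist_triangle_right y y' 0
      rw [Metric.mem_closedBall] at hy hy'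
      linarith
    · intro y hy hP
      have h3 := aux_pucci_le (W := 0) hLam (by simp) hP (M := hess n u y) (fun A _ _ => by simp)
      have h4 := heq y hy
      have h7 := le_max_left (f y) 0
      unfold gradNorm at h4
      linarith
  have hxn : ‖x‖ < 1 := by simpa using hx
  have hcomp : M / d0 * (1 - ‖x‖) ≤
      H * (8 * B * C0 * Wp / d0 + 1) * (FP + FQ) * (1 - ‖x‖) := by
    have h1 : M / d0 ≤ H * (8 * B * C0 * Wp / d0 + 1) * (FP + FQ) := by
      have e1 : M / d0 = (2 * C0 * Wp / d0) * FP := by rw [hM]; ring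
      have e2 : 2 * C0 * Wp / d0 ≤ 8 * B * C0 * Wp / d0 := by gcongr; linarith
      have e3 : 0 ≤ 8 * B * C0 * Wp / d0 := by positivity
      rw [e1]
      calc (2 * C0 * Wp / d0) * FP ≤ (8 * B * C0 * Wp / d0 + 1) * (FP + FQ) := by
            gcongr <;> linarith
        _ ≤ H * (8 * B * C0 * Wp / d0 + 1) * (FP + FQ) := by
            gcongr
            nlinarith
    exact mul_le_mul_of_nonneg_right h1 (by linarith)
  rcases le_or_gt d0 (1 - ‖x‖) with hdx | hdx
  · -- interior points
    refine le_trans ?_ hcomp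
    refine (hglob x (Metric.ball_subset_closedBall hx)).trans ?_
    rw [div_mul_eq_mul_div, le_div_iff₀ hd0]
    exact mul_le_mul_of_nonneg_left hdx hM0.le
  -- points close to the boundary
  have hxpos : 0 < ‖x‖ := by linarith
  set z : EuclideanSpace ℝ (Fin n) := ‖x‖⁻¹ • x with hz
  have hz1 : ‖z‖ = 1 := by
    rw [hz, norm_smul, norm_inv, norm_norm, inv_mul_cancel₀ hxpos.ne']
  have hzx : inner ℝ z x = ‖x‖ := by
    rw [hz, real_inner_smul_left, real_inner_self_eq_norm_sq]; field_simp
  have hxz : ‖x - z‖ = 1 - ‖x‖ := by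
    have : x - z = (‖x‖ - 1) • z := by
      rw [sub_smul, one_smul, hz, smul_smul, mul_inv_cancel₀ hxpos.ne', one_smul]
    rw [this, norm_smul, hz1, mul_one, Real.norm_eq_abs, abs_of_neg (by linarith)]
    ring
  have hiter : ∀ k : ℕ, ∃ a m : ℝ, 0 ≤ a ∧ 0 ≤ m ∧
      (∀ y : EuclideanSpace ℝ (Fin n), ‖y‖ ≤ 1 → ‖y - z‖ ≤ d0 * (1 / 2) ^ k →
        u y ≤ a * (1 - inner ℝ z y) + m * (d0 * (1 / 2) ^ k)) ∧
      a + 4 * B * m + FQ ≤ (4 * B * (M / d0) + FQ) *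
        Real.exp (E * ∑ j ∈ Finset.range k, s ^ j) := by
    intro k
    induction k with
    | zero =>
      refine ⟨0, M / d0, le_rfl, by positivity, ?_, by simp⟩
      intro y hy _
      have h1 := hglob y (by simpa using hy)
      have : M / d0 * (d0 * (1 / 2) ^ 0) = M := by field_simp
      rw [this]; linarith
    | succ k ih =>
      obtain ⟨a, m, ha, hm, hind, hQ⟩ := ih
      obtain ⟨r, hr⟩ : ∃ r, r = d0 * (1 / 2 : ℝ) ^ k := ⟨_, rfl⟩
      rw [← hr] at hind
      have hr0 : 0 < r := by rw [hr]; positivity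
      have hhalf : (1 / 2 : ℝ) ^ k ≤ 1 := pow_le_one₀ (by norm_num) (by norm_num)
      have hrd : r ≤ d0 := by rw [hr]; nlinarith
      have hrα : r ^ α ≤ s ^ k := by
        have e1 : r ≤ (1 / 2 : ℝ) ^ k := by
          rw [hr]
          have : (0 : ℝ) < (1 / 2 : ℝ) ^ k := by positivity
          nlinarith
        calc r ^ α ≤ ((1 / 2 : ℝ) ^ k) ^ α := Real.rpow_le_rpow hr0.le e1 hα0.le
          _ = s ^ k := by
            rw [hs, ← Real.rpow_natCast, ← Real.rpow_mul (by norm_num), mul_comm,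
              Real.rpow_mul (by norm_num), Real.rpow_natCast]
      have hrα0 : 0 < r ^ α := by positivity
      obtain ⟨t, ht⟩ : ∃ t, t = a + m * (2 + 3 * B) := ⟨_, rfl⟩
      have ht0 : 0 ≤ t := by rw [ht]; positivity
      set D : Set (EuclideanSpace ℝ (Fin n)) := Metric.ball 0 1 ∩ Metric.ball z r with hD
      have hDo : IsOpen D := Metric.isOpen_ball.inter Metric.isOpen_ball
      have hDB : D ⊆ Metric.ball 0 1 := Set.inter_subset_left
      have hDE : D ⊆ {y ∈ Metric.ball (0 : EuclideanSpace ℝ (Fin n)) 1 | 1 - ‖y‖ < d0} := by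
        rintro y ⟨hy1, hy2⟩
        refine ⟨hy1, ?_⟩
        rw [Metric.mem_ball, dist_eq_norm, norm_sub_rev] at hy2
        have := norm_sub_norm_le z y
        rw [hz1] at this
        linarith
      have hbD : ∫⁻ x in D, ENNReal.ofReal (b x ^ n) ≤
          ENNReal.ofReal ((K * (W * r ^ α)) ^ n) := by
        have := aux_holder hn1 hq.le hDo hDB (hbc.mono hDB) (fun x hx => hb0 x (hDB hx)) hK.le hbK
          hr0 (Set.inter_subset_right : D ⊆ Metric.ball z r)
        rw [← hw, ← hW, ← hα] at this
        exact this
      have hfD : ∫⁻ x in D, ENNReal.ofReal (max (f x) 0 ^ n) ≤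
          ENNReal.ofReal ((FQ * (W * r ^ α)) ^ n) := by
        have := aux_holder hn1 hq.le hDo hDE (hfmc.mono hDB) (fun x _ => le_max_right _ _)
          hFQ.le hfq hr0 (Set.inter_subset_right : D ⊆ Metric.ball z r)
        rw [← hw, ← hW, ← hα] at this
        exact this
      obtain ⟨μ, hμ⟩ : ∃ μ, μ = 2 * (FQ * (W * r ^ α) + t * (K * (W * r ^ α))) := ⟨_, rfl⟩
      have hμ0 : 0 < μ := by rw [hμ]; positivity
      have hgD := aux_combine hn1 hDo (hfmc.mono hDB) (fun x _ => le_max_right _ _)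
        (fun x hx => hb0 x (hDB hx)) (by positivity) (by positivity) ht0 hfD hbD
      rw [← hμ, ht] at hgD
      have hstep := aux_step hlam hLam hB hC0 habp hbc hfc hb0 huc hu2 heq hbd hz1 hr0 ha hm hμ0
        hind hgD ((lintegral_mono_set hDB).trans hbi1)
      refine ⟨a + B * m, m / 2 + 4 * C0 * μ, by positivity, by positivity, ?_, ?_⟩
      · intro y hy1 hy2
        have e : d0 * (1 / 2 : ℝ) ^ (k + 1) = r / 2 := by rw [hr, pow_succ]; ring
        rw [e] at hy2 ⊢
        have := hstep y hy1 hy2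
        linarith
      · rw [Finset.sum_range_succ, mul_add E, Real.exp_add, ← mul_assoc (4 * B * (M / d0) + FQ)]
        have k1 : t ≤ 2 * (a + 4 * B * m) := by rw [ht]; nlinarith
        have k2 : μ ≤ 2 * (W * r ^ α) * ((1 + 2 * K) * (a + 4 * B * m + FQ)) := by
          have e : μ = 2 * (W * r ^ α) * (FQ + t * K) := by rw [hμ]; ring
          rw [e]
          have e2 : t * K ≤ 2 * (a + 4 * B * m) * K := mul_le_mul_of_nonneg_right k1 hK.le
          have e3 : 0 ≤ a + 4 * B * m := by positivity
          gcongr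
          nlinarith
        have k3 : a + B * m + 4 * B * (m / 2 + 4 * C0 * μ) + FQ ≤
            (a + 4 * B * m + FQ) * (1 + E * s ^ k) := by
          have e1 : 16 * B * C0 * μ ≤ 16 * B * C0 *
              (2 * (W * s ^ k) * ((1 + 2 * K) * (a + 4 * B * m + FQ))) := by
            refine mul_le_mul_of_nonneg_left (k2.trans ?_) (by positivity)
            gcongr
          have e2 : 16 * B * C0 * (2 * (W * s ^ k) * ((1 + 2 * K) * (a + 4 * B * m + FQ))) =
              (a + 4 * B * m + FQ) * (E * s ^ k) := by rw [hE]; ring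
          have e3 : 0 ≤ B * m := by positivity
          nlinarith
        have k4 : 1 + E * s ^ k ≤ Real.exp (E * s ^ k) := by
          have := Real.add_one_le_exp (E * s ^ k); linarith
        refine k3.trans ?_
        exact mul_le_mul hQ k4 (by positivity) (by positivity)
  -- choose the right scale
  obtain ⟨k, hk1, hk2⟩ := exists_nat_pow_near_of_lt_one (x := (1 - ‖x‖) / d0) (y := (1 / 2 : ℝ))
    (div_pos (by linarith) hd0) (by rw [div_le_one hd0]; exact hdx.le) (by norm_num) (by norm_num)
  rw [lt_div_iff₀ hd0] at hk1
  rw [div_le_iff₀ hd0] at hk2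
  obtain ⟨a, m, ha, hm, hind, hQ⟩ := hiter k
  have h1 := hind x hxn.le (by rw [hxz]; linarith)
  rw [hzx] at h1
  have hd : 0 < 1 - ‖x‖ := by linarith
  have h2 : m * (d0 * (1 / 2) ^ k) ≤ m * (2 * (1 - ‖x‖)) := by
    rw [pow_succ] at hk1
    apply mul_le_mul_of_nonneg_left _ hm
    linarith
  have h3 : Real.exp (E * ∑ j ∈ Finset.range k, s ^ j) ≤ H := by
    rw [hH]
    apply Real.exp_le_exp.2
    apply mul_le_mul_of_nonneg_left _ hE0.le
    rw [← tsum_geometric_of_lt_one hs0.le hs1]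
    exact (summable_geometric_of_lt_one hs0.le hs1).sum_le_tsum _ (fun _ _ => by positivity)
  have h4 : a + 2 * m ≤ H * (8 * B * C0 * Wp / d0 + 1) * (FP + FQ) := by
    have e1 : a + 2 * m ≤ a + 4 * B * m + FQ := by nlinarith
    have e2 : (4 * B * (M / d0) + FQ) * Real.exp (E * ∑ j ∈ Finset.range k, s ^ j) ≤
        (4 * B * (M / d0) + FQ) * H := mul_le_mul_of_nonneg_left h3 (by positivity)
    have e3 : 4 * B * (M / d0) = (8 * B * C0 * Wp / d0) * FP := by rw [hM]; ring
    have e4 : 0 ≤ 8 * B * C0 * Wp / d0 := by positivity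
    have e5 : 4 * B * (M / d0) + FQ ≤ (8 * B * C0 * Wp / d0 + 1) * (FP + FQ) := by
      rw [e3]; nlinarith
    have e6 := mul_le_mul_of_nonneg_right e5 (by linarith : 0 ≤ H)
    linarith
  calc u x ≤ (a + 2 * m) * (1 - ‖x‖) := by linarith
    _ ≤ _ := mul_le_mul_of_nonneg_right h4 hd.le

/-- Global boundary Lipschitz bound in the unit ball. -/
theorem global_boundary_lipschitz_bound_unit_ball
    (n : ℕ) (hn : 2 ≤ n) (lam Lam : ℝ) (hlam : 0 < lam) (hLam : lam ≤ Lam)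
    (p q d0 K : ℝ) (hq : (n : ℝ) < q) (hp : (n : ℝ) ≤ p) (hpq : p ≤ q)
    (hd0 : 0 < d0) (hd0' : d0 ≤ 1 / 4) (hK : 0 < K) :
    ∃ C : ℝ, 0 < C ∧
      ∀ b f u : EuclideanSpace ℝ (Fin n) → ℝ,
        ContinuousOn b (Metric.ball 0 1) →
        ContinuousOn f (Metric.ball 0 1) →
        (∀ x ∈ Metric.ball (0 : EuclideanSpace ℝ (Fin n)) 1, 0 ≤ b x) →
        LpNormE n q b (Metric.ball 0 1) ≤ ENNReal.ofReal K →
        ContinuousOn u (Metric.closedBall 0 1) →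
        ContDiffOn ℝ 2 u (Metric.ball 0 1) →
        (∀ x ∈ Metric.ball (0 : EuclideanSpace ℝ (Fin n)) 1,
          -f x ≤ pucciPlus n lam Lam (hess n u x) + b x * gradNorm n u x) →
        (∀ x ∈ Metric.sphere (0 : EuclideanSpace ℝ (Fin n)) 1, u x ≤ 0) →
        ∀ x ∈ Metric.ball (0 : EuclideanSpace ℝ (Fin n)) 1,
          ENNReal.ofReal (u x)
            ≤ ENNReal.ofReal C *
              (LpNormE n p (fun y => max (f y) 0) (Metric.ball 0 1)
                + LpNormE n q (fun y => max (f y) 0)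
                    {y ∈ Metric.ball (0 : EuclideanSpace ℝ (Fin n)) 1 | 1 - ‖y‖ < d0}) *
              ENNReal.ofReal (1 - ‖x‖) := by
  obtain ⟨C, hC, hmain⟩ := aux_main_real n hn lam Lam hlam hLam p q d0 K hq hp hd0 hd0' hK
  refine ⟨C, hC, ?_⟩
  intro b f u hbc hfc hb0 hbK huc hu2 heq hbd x hx
  have hxn : ‖x‖ < 1 := by simpa using hx
  have hd : 0 < 1 - ‖x‖ := by linarith
  have hdE : ENNReal.ofReal (1 - ‖x‖) ≠ 0 := by simpa using hxn
  have hCE : ENNReal.ofReal C ≠ 0 := by simpa using hC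
  set NP := LpNormE n p (fun y => max (f y) 0) (Metric.ball 0 1) with hNP
  set NQ := LpNormE n q (fun y => max (f y) 0)
    {y ∈ Metric.ball (0 : EuclideanSpace ℝ (Fin n)) 1 | 1 - ‖y‖ < d0} with hNQ
  by_cases htop : NP + NQ = ⊤
  · rw [htop, ENNReal.mul_top hCE, ENNReal.top_mul hdE]
    exact le_top
  obtain ⟨hP, hQ⟩ := ENNReal.add_ne_top.1 htop
  have key : u x ≤ C * (NP.toReal + NQ.toReal) * (1 - ‖x‖) := by
    apply le_of_forall_pos_le_add
    intro ε hε
    have hδ : 0 < ε / (2 * C * (1 - ‖x‖)) := by positivity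
    have h := hmain b f u hbc hfc hb0 hbK huc hu2 heq hbd
      (NP.toReal + ε / (2 * C * (1 - ‖x‖))) (NQ.toReal + ε / (2 * C * (1 - ‖x‖)))
      (add_pos_of_nonneg_of_pos ENNReal.toReal_nonneg hδ)
      (add_pos_of_nonneg_of_pos ENNReal.toReal_nonneg hδ)
      (by rw [ENNReal.le_ofReal_iff_toReal_le hP (by positivity)]; linarith)
      (by rw [ENNReal.le_ofReal_iff_toReal_le hQ (by positivity)]; linarith) x hx
    refine h.trans (le_of_eq ?_)
    field_simp
    ring
  calc ENNReal.ofReal (u x)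
      ≤ ENNReal.ofReal (C * (NP.toReal + NQ.toReal) * (1 - ‖x‖)) := ENNReal.ofReal_le_ofReal key
    _ = _ := by
      rw [ENNReal.ofReal_mul (by positivity), ENNReal.ofReal_mul hC.le,
        ENNReal.ofReal_add ENNReal.toReal_nonneg ENNReal.toReal_nonneg,
        ENNReal.ofReal_toReal hP, ENNReal.ofReal_toReal hQ]
end

section
/- Hopf-type lemma for supersolutions in half-balls. Fix an integer n ≥ 2, reals 0 < λ ≤ Λ, and an exponent q > n. Let b : B₂⁺ → ℝ be continuous with b ≥ 0 and ‖b‖_{L^q(B₂⁺)} < ∞, and let v be a C² function on B₂⁺ with v > 0 in B₂⁺ and 𝓜⁻(D²v(x)) − b(x)|Dv(x)| ≤ 0 for all x ∈ B₂⁺. Then inf_{x ∈ B₁⁺} v(x)/x_n > 0. -/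
open MeasureTheory
open scoped ENNReal

open scoped MatrixOrder in
theorem hopf_trace_mul_nonneg {n : ℕ} {P Q : Matrix (Fin n) (Fin n) ℝ}
    (hP : P.PosSemidef) (hQ : Q.PosSemidef) : 0 ≤ (P * Q).trace := by
  obtain ⟨B, rfl⟩ := (CStarAlgebra.nonneg_iff_eq_star_mul_self (a := Q)).1 hQ.nonneg
  rw [← mul_assoc, Matrix.trace_mul_comm, ← mul_assoc]
  have := (hP.mul_mul_conjTranspose_same B).trace_nonneg
  exact this

theorem hopf_det_le {n : ℕ} {P : Matrix (Fin n) (Fin n) ℝ}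
    (hP : P.PosSemidef) : |P.det| ≤ P.trace ^ n := by
  rw [abs_of_nonneg hP.det_nonneg]
  rw [hP.isHermitian.det_eq_prod_eigenvalues, hP.isHermitian.trace_eq_sum_eigenvalues]
  have h0 := hP.eigenvalues_nonneg
  calc _ ≤ ∏ i : Fin n, (∑ j, hP.isHermitian.eigenvalues j) := by
        apply Finset.prod_le_prod
        · intro i _; exact h0 i
        · intro i _
          exact Finset.single_le_sum (f := hP.isHermitian.eigenvalues) (fun j _ => h0 j) (Finset.mem_univ i)
    _ = _ := by simp

theorem hopf_hess_apply {n : ℕ} {u : EuclideanSpace ℝ (Fin n) → ℝ} {x : EuclideanSpace ℝ (Fin n)}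
    (hu : ContDiffAt ℝ 2 u x) (i j : Fin n) :
    hess n u x i j = fderiv ℝ (fderiv ℝ u) x (EuclideanSpace.single i 1)
      (EuclideanSpace.single j 1) := by
  have h1 : DifferentiableAt ℝ (fderiv ℝ u) x :=
    (hu.fderiv_right (m := 1) (by norm_num)).differentiableAt (by norm_num)
  unfold hess
  rw [fderiv_clm_apply h1 (differentiableAt_const _)]
  simp

theorem hopf_hess_symm {n : ℕ} {u : EuclideanSpace ℝ (Fin n) → ℝ} {x : EuclideanSpace ℝ (Fin n)}
    (hu : ContDiffAt ℝ 2 u x) : (hess n u x).IsHermitian := by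
  ext i j
  simp only [Matrix.conjTranspose_apply, star_trivial]
  rw [hopf_hess_apply hu, hopf_hess_apply hu]
  exact hu.isSymmSndFDerivAt (by simp) _ _

/-- one-dimensional second order necessary condition -/
theorem hopf_snd_1d {f : ℝ → ℝ} {x : ℝ} (hc : ContinuousAt f x) (hm : IsLocalMin f x) :
    0 ≤ deriv (deriv f) x := by
  by_contra h
  push Not at h
  have hM := isLocalMax_of_deriv_deriv_neg h hm.deriv_eq_zero hc
  have he : f =ᶠ[nhds x] fun _ => f x := by
    filter_upwards [hm, hM] with y h1 h2
    exact le_antisymm h2 h1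
  have h2 : deriv f =ᶠ[nhds x] fun _ => 0 := by
    filter_upwards [he.eventuallyEq_nhds] with y hy
    rw [hy.deriv_eq]; simp
  rw [h2.deriv_eq] at h
  simp at h

/-- At a touching point from below by an affine function: gradient and Hessian. -/
theorem hopf_contact {n : ℕ} {u : EuclideanSpace ℝ (Fin n) → ℝ} {x p : EuclideanSpace ℝ (Fin n)}
    (hu : ContDiffAt ℝ 2 u x)
    (hm : IsLocalMin (fun y => u y - inner ℝ p y) x) :
    fderiv ℝ u x = innerSL ℝ p ∧ (hess n u x).PosSemidef := by
  have hd : DifferentiableAt ℝ u x := hu.differentiableAt (by norm_num)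
  have h1 : DifferentiableAt ℝ (fderiv ℝ u) x :=
    (hu.fderiv_right (m := 1) (by norm_num)).differentiableAt (by norm_num)
  have key : fderiv ℝ u x = innerSL ℝ p := by
    have h3 : HasFDerivAt (fun y => u y - inner ℝ p y) (fderiv ℝ u x - innerSL ℝ p) x :=
      hd.hasFDerivAt.sub (innerSL ℝ p).hasFDerivAt
    have := hm.hasFDerivAt_eq_zero h3
    exact sub_eq_zero.1 this
  refine ⟨key, ?_⟩
  have hsec : ∀ w : EuclideanSpace ℝ (Fin n), 0 ≤ fderiv ℝ (fderiv ℝ u) x w w := by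
    intro w
    set φ : ℝ → ℝ := fun t => u (x + t • w) - inner ℝ p (x + t • w) with hφ
    have hline : ∀ t : ℝ, HasDerivAt (fun t : ℝ => x + t • w) w t := by
      intro t
      simpa using ((hasDerivAt_id t).smul_const w).const_add x
    have hcont : ContinuousAt (fun t : ℝ => x + t • w) 0 := (hline 0).continuousAt
    have hcont' : Filter.Tendsto (fun t : ℝ => x + t • w) (nhds 0) (nhds x) := by
      have := hcont.tendsto; simpa using this
    have hmin : IsLocalMin φ 0 := by
      have := hcont'.eventually hm
      simpa [IsLocalMin, IsMinFilter, hφ] using this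
    have hev : ∀ᶠ y in nhds x, DifferentiableAt ℝ u y := by
      have := hu.eventually (by simp)
      filter_upwards [this] with y hy using hy.differentiableAt (by norm_num)
    have hder : deriv φ =ᶠ[nhds 0] fun t => fderiv ℝ u (x + t • w) w - inner ℝ p w := by
      filter_upwards [hcont'.eventually hev] with t ht
      have a1 : HasDerivAt (fun t : ℝ => u (x + t • w)) (fderiv ℝ u (x + t • w) w) t :=
        ht.hasFDerivAt.comp_hasDerivAt t (hline t)
      have a2 : HasDerivAt (fun t : ℝ => inner ℝ p (x + t • w)) (inner ℝ p w) t :=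
        (innerSL ℝ p).hasFDerivAt.comp_hasDerivAt t (hline t)
      exact (a1.sub a2).deriv
    have hc : ContinuousAt φ 0 := by
      have hcu : ContinuousAt (fun y => u y - inner ℝ p y) x :=
        hd.continuousAt.sub (innerSL ℝ p).continuous.continuousAt
      have : ContinuousAt (fun y => u y - inner ℝ p y) (x + (0:ℝ) • w) := by simpa using hcu
      exact ContinuousAt.comp (g := fun y => u y - inner ℝ p y) this hcont
    have h2 := hopf_snd_1d hc hmin
    rw [hder.deriv_eq] at h2
    have h1' : HasFDerivAt (fderiv ℝ u) (fderiv ℝ (fderiv ℝ u) x) (x + (0:ℝ) • w) := by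
      simpa using h1.hasFDerivAt
    have a3 : HasDerivAt (fun t : ℝ => fderiv ℝ u (x + t • w)) (fderiv ℝ (fderiv ℝ u) x w) 0 :=
      h1'.comp_hasDerivAt 0 (hline 0)
    have a4 := (a3.clm_apply (hasDerivAt_const (0:ℝ) w)).sub_const (inner ℝ p w)
    rw [a4.deriv] at h2
    simpa using h2
  refine Matrix.PosSemidef.of_dotProduct_mulVec_nonneg (hopf_hess_symm hu) ?_
  intro c
  have := hsec (WithLp.toLp 2 c)
  have hc : (WithLp.toLp 2 c : EuclideanSpace ℝ (Fin n)) =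
      ∑ i, c i • EuclideanSpace.single i (1:ℝ) := by
    ext j
    simp [Finset.sum_apply, Pi.single_apply]
  rw [hc] at this
  simp only [map_sum, map_smul, sum_apply, smul_apply,
    smul_eq_mul] at this
  simp only [dotProduct, Matrix.mulVec, star_trivial, hopf_hess_apply hu]
  refine this.trans_eq ?_
  apply Finset.sum_congr rfl; intro i _
  rw [Finset.mul_sum, Finset.mul_sum]
  apply Finset.sum_congr rfl; intro j _
  rw [hu.isSymmSndFDerivAt (by simp) (EuclideanSpace.single j 1) (EuclideanSpace.single i 1)]
  ring

/-- The gradient map as a vector of partial derivatives. -/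
noncomputable def hopfGrad (n : ℕ) (u : EuclideanSpace ℝ (Fin n) → ℝ)
    (x : EuclideanSpace ℝ (Fin n)) : EuclideanSpace ℝ (Fin n) :=
  WithLp.toLp 2 (fun j => fderiv ℝ u x (EuclideanSpace.single j (1 : ℝ)))

theorem hopf_grad_eq {n : ℕ} {u : EuclideanSpace ℝ (Fin n) → ℝ} {x p : EuclideanSpace ℝ (Fin n)}
    (h : fderiv ℝ u x = innerSL ℝ p) : hopfGrad n u x = p := by
  ext j
  simp [hopfGrad, h, EuclideanSpace.inner_single_right]

theorem hopf_grad_hasFDerivAt {n : ℕ} {u : EuclideanSpace ℝ (Fin n) → ℝ}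
    {x : EuclideanSpace ℝ (Fin n)} (hu : ContDiffAt ℝ 2 u x) :
    ∃ f' : EuclideanSpace ℝ (Fin n) →L[ℝ] EuclideanSpace ℝ (Fin n),
      HasFDerivAt (hopfGrad n u) f' x ∧ f'.det = (hess n u x).det := by
  have h1 : DifferentiableAt ℝ (fderiv ℝ u) x :=
    (hu.fderiv_right (m := 1) (by norm_num)).differentiableAt (by norm_num)
  have hd : DifferentiableAt ℝ (hopfGrad n u) x := by
    rw [differentiableAt_piLp]
    intro j
    exact h1.clm_apply (differentiableAt_const _)
  refine ⟨fderiv ℝ (hopfGrad n u) x, hd.hasFDerivAt, ?_⟩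
  have hentry : ∀ i j, (fderiv ℝ (hopfGrad n u) x (EuclideanSpace.single j 1)) i
      = hess n u x j i := by
    intro i j
    unfold hess
    have h4 : HasFDerivAt (fun y => fderiv ℝ u y (EuclideanSpace.single i (1 : ℝ))) _ x :=
      (EuclideanSpace.proj (𝕜 := ℝ) i).hasFDerivAt.comp x hd.hasFDerivAt
    rw [h4.fderiv]
    simp
  have : (hess n u x).transpose = LinearMap.toMatrix (EuclideanSpace.basisFun (Fin n) ℝ).toBasis
      (EuclideanSpace.basisFun (Fin n) ℝ).toBasis
      (fderiv ℝ (hopfGrad n u) x : EuclideanSpace ℝ (Fin n) →ₗ[ℝ] EuclideanSpace ℝ (Fin n)) := by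
    ext i j
    rw [LinearMap.toMatrix_apply]
    simp [hentry]
  rw [← Matrix.det_transpose, this, LinearMap.det_toMatrix]

theorem hopf_hess_contOn {n : ℕ} {u : EuclideanSpace ℝ (Fin n) → ℝ}
    {Ω : Set (EuclideanSpace ℝ (Fin n))} (hΩ : IsOpen Ω) (hu : ContDiffOn ℝ 2 u Ω) :
    ContinuousOn (hess n u) Ω := by
  refine continuousOn_pi.2 fun i => continuousOn_pi.2 fun j => ?_
  have h1 : ContDiffOn ℝ 1 (fderiv ℝ u) Ω := hu.fderiv_of_isOpen hΩ (by norm_num)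
  have h2 : ContinuousOn (fderiv ℝ (fderiv ℝ u)) Ω :=
    h1.continuousOn_fderiv_of_isOpen hΩ (by norm_num)
  have h3 : ContinuousOn (fun x => fderiv ℝ (fderiv ℝ u) x (EuclideanSpace.single i 1)
      (EuclideanSpace.single j 1)) Ω :=
    (h2.clm_apply continuousOn_const).clm_apply continuousOn_const
  refine h3.congr ?_
  intro x hx
  exact hopf_hess_apply (hu.contDiffAt (hΩ.mem_nhds hx)) i j

/-- Aleksandrov–Bakelman–Pucci estimate for C² functions. -/
theorem hopf_abp {n : ℕ} {u ℓ f : EuclideanSpace ℝ (Fin n) → ℝ}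
    {Ω : Set (EuclideanSpace ℝ (Fin n))} {d s : ℝ} (hs : 0 < s) (hΩ : IsOpen Ω)
    (hd : ∀ x ∈ Ω, ∀ y ∈ Ω, ‖x - y‖ ≤ d)
    (hu : ContDiffOn ℝ 2 u Ω) (hl : Continuous ℓ) (hul : ∀ x ∈ Ω, ℓ x ≤ u x)
    (hlb : ∀ x ∈ closure Ω, x ∉ Ω → 0 ≤ ℓ x)
    (hf : ContinuousOn f Ω)
    (hpde : ∀ x ∈ Ω, (hess n u x).PosSemidef → ‖fderiv ℝ u x‖ < s → (hess n u x).trace ≤ f x)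
    (hInt : ∫⁻ x in Ω, ENNReal.ofReal (f x ^ n) < volume (Metric.ball (0 : EuclideanSpace ℝ (Fin n)) s)) :
    ∀ x ∈ Ω, - (s * d) ≤ u x := by
  intro x0 hx0
  by_contra hneg
  push Not at hneg
  have hd0 : 0 ≤ d := (norm_nonneg _).trans (hd x0 hx0 x0 hx0)
  have hcd : ∀ x ∈ closure Ω, ‖x - x0‖ ≤ d := by
    intro x hx
    have hcl : IsClosed {x : EuclideanSpace ℝ (Fin n) | ‖x - x0‖ ≤ d} :=
      isClosed_le (by fun_prop) continuous_const
    exact closure_minimal (fun y hy => hd y hy x0 hx0) hcl hx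
  have hdetc : ContinuousOn (fun x => (hess n u x).det) Ω := by
    have : Continuous (fun M : Matrix (Fin n) (Fin n) ℝ => M.det) := continuous_id.matrix_det
    exact this.comp_continuousOn (hopf_hess_contOn hΩ hu)
  set S : Set (EuclideanSpace ℝ (Fin n)) := {x ∈ Ω | |(hess n u x).det| ≤ f x ^ n} with hS
  have hSm : MeasurableSet S := by
    have hc : ContinuousOn (fun x => f x ^ n - |(hess n u x).det|) Ω := (hf.pow n).sub hdetc.abs
    obtain ⟨V, hV, hVe⟩ := (continuousOn_iff_isClosed.1 hc) (Set.Ici 0) isClosed_Ici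
    have : S = V ∩ Ω := by
      rw [← hVe]
      ext x
      simp [hS, and_comm]
    rw [this]
    exact hV.measurableSet.inter hΩ.measurableSet
  have hsub : Metric.ball (0 : EuclideanSpace ℝ (Fin n)) s ⊆ hopfGrad n u '' S := by
    intro p hp
    have hp' : ‖p‖ < s := by simpa using hp
    set m : EuclideanSpace ℝ (Fin n) → ℝ := fun x => ℓ x - inner ℝ p (x - x0) with hm
    have hmc : Continuous m := by
      have : Continuous (fun x : EuclideanSpace ℝ (Fin n) => inner ℝ p (x - x0)) := by fun_prop
      exact hl.sub this
    set C : Set (EuclideanSpace ℝ (Fin n)) := {x ∈ closure Ω | m x ≤ u x0} with hC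
    have hip : ∀ x ∈ closure Ω, inner ℝ p (x - x0) ≤ s * d := by
      intro x hx
      calc inner ℝ p (x - x0) ≤ ‖p‖ * ‖x - x0‖ := real_inner_le_norm _ _
        _ ≤ s * d := by
          apply mul_le_mul hp'.le (hcd x hx) (norm_nonneg _) hs.le
    have hCΩ : C ⊆ Ω := by
      rintro x ⟨hx, hx2⟩
      by_contra hxn
      have h1 := hlb x hx hxn
      have h2 := hip x hx
      simp only [hm] at hx2
      linarith
    have hCcl : IsClosed C := isClosed_closure.inter (isClosed_le hmc continuous_const)
    have hCb : Bornology.IsBounded C := by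
      refine (Metric.isBounded_closedBall (x := x0) (r := d)).subset ?_
      rintro x ⟨hx, -⟩
      rw [mem_closedBall_iff_norm]
      exact hcd x hx
    have hCc : IsCompact C := Metric.isCompact_of_isClosed_isBounded hCcl hCb
    have hx0C : x0 ∈ C := by
      refine ⟨subset_closure hx0, ?_⟩
      simpa [hm] using hul x0 hx0
    have hφc : ContinuousOn (fun y => u y - inner ℝ p y) C := by
      refine (hu.continuousOn.mono hCΩ).sub ?_
      fun_prop
    obtain ⟨x1, hx1C, hx1min⟩ := hCc.exists_isMinOn ⟨x0, hx0C⟩ hφc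
    have hx1 := hCΩ hx1C
    have hmin : IsLocalMin (fun y => u y - inner ℝ p y) x1 := by
      filter_upwards [hΩ.mem_nhds hx1] with y hy
      by_cases hyC : y ∈ C
      · exact hx1min hyC
      · have h3 : u x0 < m y := by
          by_contra hcon
          exact hyC ⟨subset_closure hy, not_lt.1 hcon⟩
        have h4 : u x1 - inner ℝ p x1 ≤ u x0 - inner ℝ p x0 := hx1min hx0C
        have h5 := hul y hy
        simp only [hm, inner_sub_right] at h3
        linarith
    have hcda := hu.contDiffAt (hΩ.mem_nhds hx1)
    obtain ⟨hg, hps⟩ := hopf_contact hcda hmin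
    refine ⟨x1, ⟨hx1, ?_⟩, hopf_grad_eq hg⟩
    have ht := hpde x1 hx1 hps (by rw [hg, innerSL_apply_norm]; exact hp')
    exact (hopf_det_le hps).trans (pow_le_pow_left₀ hps.trace_nonneg ht n)
  have hF : ∀ x ∈ S, ∃ f' : EuclideanSpace ℝ (Fin n) →L[ℝ] EuclideanSpace ℝ (Fin n),
      HasFDerivAt (hopfGrad n u) f' x ∧ f'.det = (hess n u x).det := fun x hx =>
    hopf_grad_hasFDerivAt (hu.contDiffAt (hΩ.mem_nhds hx.1))
  choose! F' hF1 hF2 using hF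
  have h1 := addHaar_image_le_lintegral_abs_det_fderiv volume hSm
    (fun x hx => (hF1 x hx).hasFDerivWithinAt)
  have h2 : ∫⁻ x in S, ENNReal.ofReal |(F' x).det| ≤ ∫⁻ x in Ω, ENNReal.ofReal (f x ^ n) := by
    calc _ ≤ ∫⁻ x in S, ENNReal.ofReal (f x ^ n) := by
          apply setLIntegral_mono' hSm
          intro x hx
          rw [hF2 x hx]
          exact ENNReal.ofReal_le_ofReal hx.2
      _ ≤ _ := lintegral_mono_set (fun x hx => hx.1)
  exact absurd ((measure_mono hsub).trans (h1.trans h2)) (not_le.2 hInt)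

/-- The quadratic barrier. -/
noncomputable def hopfBar {n : ℕ} (l : Fin n) (x0 : EuclideanSpace ℝ (Fin n)) (c1 c2 β : ℝ)
    (y : EuclideanSpace ℝ (Fin n)) : ℝ :=
  c1 * y l + c2 * (‖y - x0‖ ^ 2 - β * (y l) ^ 2)

theorem hopfBar_contDiff {n : ℕ} (l : Fin n) (x0 : EuclideanSpace ℝ (Fin n)) (c1 c2 β : ℝ) :
    ContDiff ℝ 2 (hopfBar l x0 c1 c2 β) := by
  have h1 : ContDiff ℝ 2 (fun y : EuclideanSpace ℝ (Fin n) => y l) :=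
    (EuclideanSpace.proj (𝕜 := ℝ) l).contDiff
  have h2 : ContDiff ℝ 2 (fun y : EuclideanSpace ℝ (Fin n) => ‖y - x0‖ ^ 2) :=
    (contDiff_id.sub contDiff_const).norm_sq ℝ
  unfold hopfBar
  exact (contDiff_const.mul h1).add (contDiff_const.mul (h2.sub (contDiff_const.mul (h1.pow 2))))

theorem hopfBar_fderiv {n : ℕ} (l : Fin n) (x0 : EuclideanSpace ℝ (Fin n)) (c1 c2 β : ℝ)
    (y w : EuclideanSpace ℝ (Fin n)) :
    fderiv ℝ (hopfBar l x0 c1 c2 β) y w =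
      c1 * w l + c2 * (2 * inner ℝ (y - x0) w - β * (2 * y l * w l)) := by
  have h1 : HasFDerivAt (fun y : EuclideanSpace ℝ (Fin n) => y l)
      (EuclideanSpace.proj (𝕜 := ℝ) l) y := (EuclideanSpace.proj (𝕜 := ℝ) l).hasFDerivAt
  have h2 := ((hasFDerivAt_id (𝕜 := ℝ) y).sub_const x0).norm_sq
  have h3 := (h1.const_mul c1).add ((h2.sub ((h1.pow 2).const_mul β)).const_mul c2)
  have h4 : HasFDerivAt (hopfBar l x0 c1 c2 β) _ y := h3
  rw [h4.fderiv]
  simp [inner_sub_left]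

theorem hopfBar_hess {n : ℕ} (l : Fin n) (x0 : EuclideanSpace ℝ (Fin n)) (c1 c2 β : ℝ)
    (x : EuclideanSpace ℝ (Fin n)) :
    hess n (hopfBar l x0 c1 c2 β) x =
      (2 * c2) • (1 : Matrix (Fin n) (Fin n) ℝ) - (2 * c2 * β) • Matrix.single l l (1 : ℝ) := by
  ext i j
  unfold hess
  simp only [hopfBar_fderiv]
  have h1 : ∀ y : EuclideanSpace ℝ (Fin n), HasFDerivAt (fun y : EuclideanSpace ℝ (Fin n) => y l)
      (EuclideanSpace.proj (𝕜 := ℝ) l) y := fun y => (EuclideanSpace.proj (𝕜 := ℝ) l).hasFDerivAt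
  have h2 : HasFDerivAt (fun y : EuclideanSpace ℝ (Fin n) => y j)
      (EuclideanSpace.proj (𝕜 := ℝ) j) x := (EuclideanSpace.proj (𝕜 := ℝ) j).hasFDerivAt
  set e : ℝ := (EuclideanSpace.single j (1:ℝ) : EuclideanSpace ℝ (Fin n)) l with he
  have h5 : (fun y : EuclideanSpace ℝ (Fin n) =>
      c1 * e + c2 * (2 * inner ℝ (y - x0) (EuclideanSpace.single j (1:ℝ)) - β * (2 * y l * e)))
      = fun y => c1 * e + c2 * (2 * (y j - x0 j) - β * (2 * y l * e)) := by
    ext y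
    simp [EuclideanSpace.inner_single_right]
  rw [h5]
  have h3 := ((((h2.sub_const (x0 j)).const_mul 2).sub
    ((((h1 x).const_mul 2).mul_const e).const_mul β)).const_mul c2).const_add (c1 * e)
  have h4 : HasFDerivAt (fun y : EuclideanSpace ℝ (Fin n) =>
      c1 * e + c2 * (2 * (y j - x0 j) - β * (2 * y l * e))) _ x := h3
  rw [h4.fderiv]
  by_cases hij : i = j
  · subst hij
    by_cases hil : i = l
    · subst hil
      simp [he]
      ring
    · simp [he, Ne.symm hil]
      try ring
  · by_cases hil : i = l
    · subst hil
      simp [he, hij, Ne.symm hij]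
    · simp [he, hij, Ne.symm hij, Ne.symm hil]
      right
      split_ifs <;> simp [Ne.symm hil]

theorem hopfBar_trace {n : ℕ} (l : Fin n) (x0 : EuclideanSpace ℝ (Fin n)) (c1 c2 β lam Lam : ℝ)
    (hc2 : 0 ≤ c2) (hβ0 : 0 ≤ β) (hβ : n * Lam ≤ β * lam)
    (x : EuclideanSpace ℝ (Fin n)) (A : Matrix (Fin n) (Fin n) ℝ)
    (h1 : (A - lam • (1 : Matrix (Fin n) (Fin n) ℝ)).PosSemidef)
    (h2 : (Lam • (1 : Matrix (Fin n) (Fin n) ℝ) - A).PosSemidef) :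
    (A * hess n (hopfBar l x0 c1 c2 β) x).trace ≤ 0 := by
  have hl : lam ≤ A l l := by
    have := h1.diag_nonneg (i := l)
    simpa using this
  have ht : A.trace ≤ n * Lam := by
    have := h2.trace_nonneg
    simp [Matrix.trace_sub, Matrix.trace_smul] at this
    linarith
  have h3 : (A * Matrix.single l l (1:ℝ)).trace = A l l := by
    rw [Matrix.trace_mul_single]; simp
  rw [hopfBar_hess, Matrix.mul_sub, Matrix.trace_sub, Matrix.mul_smul, Matrix.mul_smul,
    Matrix.trace_smul, Matrix.trace_smul, Matrix.mul_one, h3]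
  simp only [smul_eq_mul]
  have : A.trace ≤ β * A l l := by nlinarith [mul_le_mul_of_nonneg_left hl hβ0]
  nlinarith

theorem hopfBar_norm {n : ℕ} (l : Fin n) (x0 : EuclideanSpace ℝ (Fin n)) (c1 c2 β : ℝ)
    (hc2 : 0 ≤ c2) (hβ0 : 0 ≤ β) (y : EuclideanSpace ℝ (Fin n)) :
    ‖fderiv ℝ (hopfBar l x0 c1 c2 β) y‖ ≤ |c1| + c2 * (2 * ‖y - x0‖ + 2 * β * |y l|) := by
  refine ContinuousLinearMap.opNorm_le_bound _ (by positivity) ?_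
  intro w
  rw [hopfBar_fderiv, Real.norm_eq_abs]
  have hw : |w l| ≤ ‖w‖ := by simpa using PiLp.norm_apply_le w l
  have hi : |inner ℝ (y - x0) w| ≤ ‖y - x0‖ * ‖w‖ := abs_real_inner_le_norm _ _
  calc _ ≤ |c1 * w l| + |c2 * (2 * inner ℝ (y - x0) w - β * (2 * y l * w l))| := abs_add_le _ _
    _ = |c1| * |w l| + c2 * |2 * inner ℝ (y - x0) w - β * (2 * y l * w l)| := by
        rw [abs_mul, abs_mul, abs_of_nonneg hc2]
    _ ≤ |c1| * |w l| + c2 * (|2 * inner ℝ (y - x0) w| + |β * (2 * y l * w l)|) := by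
        gcongr; exact abs_sub _ _
    _ = |c1| * |w l| + c2 * (2 * |inner ℝ (y - x0) w| + β * (2 * |y l| * |w l|)) := by
        simp only [abs_mul, abs_of_nonneg hβ0, abs_two]
    _ ≤ |c1| * ‖w‖ + c2 * (2 * (‖y - x0‖ * ‖w‖) + β * (2 * |y l| * ‖w‖)) := by gcongr
    _ = _ := by ring

theorem hopf_hess_add {n : ℕ} {u g : EuclideanSpace ℝ (Fin n) → ℝ}
    {x : EuclideanSpace ℝ (Fin n)} (hu : ContDiffAt ℝ 2 u x) (hg : ContDiffAt ℝ 2 g x) :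
    hess n (fun y => u y + g y) x = hess n u x + hess n g x := by
  ext i j
  have hug : ContDiffAt ℝ 2 (fun y => u y + g y) x := hu.add hg
  rw [Matrix.add_apply, hopf_hess_apply hu, hopf_hess_apply hg, hopf_hess_apply hug]
  have hev : fderiv ℝ (fun y => u y + g y) =ᶠ[nhds x] fun y => fderiv ℝ u y + fderiv ℝ g y := by
    filter_upwards [hu.eventually (by simp), hg.eventually (by simp)] with y h1 h2
    exact fderiv_fun_add (h1.differentiableAt (by norm_num)) (h2.differentiableAt (by norm_num))
  rw [hev.fderiv_eq]
  have d1 : DifferentiableAt ℝ (fderiv ℝ u) x :=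
    (hu.fderiv_right (m := 1) (by norm_num)).differentiableAt (by norm_num)
  have d2 : DifferentiableAt ℝ (fderiv ℝ g) x :=
    (hg.fderiv_right (m := 1) (by norm_num)).differentiableAt (by norm_num)
  rw [fderiv_fun_add d1 d2]
  simp

theorem hopf_pde {n : ℕ} {v g : EuclideanSpace ℝ (Fin n) → ℝ} {x : EuclideanSpace ℝ (Fin n)}
    {lam Lam bx s K : ℝ} (hlam : 0 < lam) (hLam : lam ≤ Lam)
    (hv : ContDiffAt ℝ 2 v x) (hg : ContDiffAt ℝ 2 g x) (hb : 0 ≤ bx)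
    (hsup : pucciMinus n lam Lam (hess n v x) - bx * gradNorm n v x ≤ 0)
    (htr : ∀ A : Matrix (Fin n) (Fin n) ℝ, (A - lam • (1 : Matrix (Fin n) (Fin n) ℝ)).PosSemidef →
      (Lam • (1 : Matrix (Fin n) (Fin n) ℝ) - A).PosSemidef → (A * hess n g x).trace ≤ 0)
    (hK : ‖fderiv ℝ g x‖ ≤ K)
    (hps : (hess n (fun y => v y + g y) x).PosSemidef)
    (hs : ‖fderiv ℝ (fun y => v y + g y) x‖ < s) :
    (hess n (fun y => v y + g y) x).trace ≤ bx * ((s + K) / lam) := by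
  have hvn : ‖fderiv ℝ v x‖ ≤ s + K := by
    have : fderiv ℝ v x = fderiv ℝ (fun y => v y + g y) x - fderiv ℝ g x := by
      rw [fderiv_fun_add (hv.differentiableAt (by norm_num)) (hg.differentiableAt (by norm_num))]
      simp
    rw [this]
    exact (norm_sub_le _ _).trans (by linarith)
  have hmain : lam * (hess n (fun y => v y + g y) x).trace ≤ bx * (s + K) := by
    apply le_of_forall_pos_lt_add
    intro ε hε
    have hlt : pucciMinus n lam Lam (hess n v x) < bx * (s + K) + ε := by
      have : bx * gradNorm n v x ≤ bx * (s + K) := mul_le_mul_of_nonneg_left hvn hb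
      linarith
    unfold pucciMinus at hlt
    obtain ⟨t, ⟨A, hA, h1, h2, rfl⟩, hlt⟩ := exists_lt_of_csInf_lt
      (by exact ⟨_, lam • (1 : Matrix (Fin n) (Fin n) ℝ), by simp [Matrix.IsSymm],
        by simpa using Matrix.PosSemidef.zero, by
          rw [← sub_smul]
          exact Matrix.PosSemidef.one.smul (sub_nonneg.2 hLam), rfl⟩) hlt
    have h3 := hopf_trace_mul_nonneg h1 hps
    rw [sub_mul, Matrix.trace_sub, Matrix.smul_mul, Matrix.one_mul, Matrix.trace_smul,
      smul_eq_mul] at h3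
    have h4 : (A * hess n (fun y => v y + g y) x).trace =
        (A * hess n v x).trace + (A * hess n g x).trace := by
      rw [hopf_hess_add hv hg, mul_add, Matrix.trace_add]
    have h5 := htr A h1 h2
    linarith
  rw [← mul_div_assoc, le_div_iff₀ hlam]
  linarith

/-- Flat cylinder of radius `r` and height `τ r`. -/
def hopfCyl {n : ℕ} (l : Fin n) (x0 : EuclideanSpace ℝ (Fin n)) (τ r : ℝ) :
    Set (EuclideanSpace ℝ (Fin n)) :=
  {y | ‖y - x0‖ ^ 2 - (y l) ^ 2 < r ^ 2 ∧ 0 < y l ∧ y l < τ * r}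

theorem hopf_cont_coord {n : ℕ} (l : Fin n) :
    Continuous (fun y : EuclideanSpace ℝ (Fin n) => y l) :=
  (EuclideanSpace.proj (𝕜 := ℝ) l).continuous

theorem hopfCyl_isOpen {n : ℕ} (l : Fin n) (x0 : EuclideanSpace ℝ (Fin n)) (τ r : ℝ) :
    IsOpen (hopfCyl l x0 τ r) := by
  have h1 := hopf_cont_coord l
  have h2 : Continuous (fun y : EuclideanSpace ℝ (Fin n) => ‖y - x0‖ ^ 2 - (y l) ^ 2) := by
    fun_prop
  exact (isOpen_lt h2 continuous_const).inter
    ((isOpen_lt continuous_const h1).inter (isOpen_lt h1 continuous_const))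

theorem hopfCyl_closure {n : ℕ} (l : Fin n) (x0 : EuclideanSpace ℝ (Fin n)) (τ r : ℝ) :
    closure (hopfCyl l x0 τ r) ⊆ {y | ‖y - x0‖ ^ 2 - (y l) ^ 2 ≤ r ^ 2 ∧ 0 ≤ y l ∧ y l ≤ τ * r} := by
  have h1 := hopf_cont_coord l
  have h2 : Continuous (fun y : EuclideanSpace ℝ (Fin n) => ‖y - x0‖ ^ 2 - (y l) ^ 2) := by
    fun_prop
  refine closure_minimal (fun y hy => ⟨hy.1.le, hy.2.1.le, hy.2.2.le⟩) ?_
  exact (isClosed_le h2 continuous_const).inter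
    ((isClosed_le continuous_const h1).inter (isClosed_le h1 continuous_const))

theorem hopfCyl_norm {n : ℕ} {l : Fin n} {x0 : EuclideanSpace ℝ (Fin n)} {τ r : ℝ}
    (hτ0 : 0 < τ) (hτ : τ ≤ 1 / 2) (hr : 0 < r) {y : EuclideanSpace ℝ (Fin n)}
    (hy : y ∈ hopfCyl l x0 τ r) : ‖y - x0‖ < 2 * r := by
  obtain ⟨h1, h2, h3⟩ := hy
  have h4 : y l < r / 2 := by nlinarith
  have h5 : (y l) ^ 2 < r ^ 2 := by nlinarith
  by_contra h
  push Not at h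
  nlinarith

theorem hopf_step {n : ℕ} {l : Fin n} {x0 : EuclideanSpace ℝ (Fin n)}
    {b v : EuclideanSpace ℝ (Fin n) → ℝ} {lam Lam β τ r a α δ s : ℝ}
    (hlam : 0 < lam) (hLam : lam ≤ Lam) (hx0 : x0 l = 0)
    (hτ0 : 0 < τ) (hτ : τ ≤ 1 / 2) (hβτ : β * τ = 1 / 2) (hβ : n * Lam ≤ β * lam)
    (hr : 0 < r) (ha : 0 < a) (hα0 : 0 ≤ α) (hα : α ≤ a) (hδ0 : 0 < δ) (hδ : δ ≤ τ * a / 2)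
    (hs : 0 < s) (hsa : s ≤ a)
    (hb : ContinuousOn b (hopfCyl l x0 τ r)) (hb0 : ∀ x ∈ hopfCyl l x0 τ r, 0 ≤ b x)
    (hv : ContDiffOn ℝ 2 v (hopfCyl l x0 τ r)) (hv0 : ∀ x ∈ hopfCyl l x0 τ r, 0 ≤ v x)
    (hsup : ∀ x ∈ hopfCyl l x0 τ r, pucciMinus n lam Lam (hess n v x) - b x * gradNorm n v x ≤ 0)
    (hlow : ∀ x ∈ hopfCyl l x0 τ r, α * x l - δ * r ≤ v x)
    (hInt : ∫⁻ x in hopfCyl l x0 τ r, ENNReal.ofReal ((b x * (4 * a / lam)) ^ n) <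
      volume (Metric.ball (0 : EuclideanSpace ℝ (Fin n)) s)) :
    ∀ y ∈ hopfCyl l x0 τ r, (α - δ * (3 / (2 * τ))) * y l
      - δ / r * (‖y - x0‖ ^ 2 - β * (y l) ^ 2) - s * (4 * r) ≤ v y := by
  have hβ0 : 0 < β := by
    by_contra h
    push Not at h
    nlinarith
  set c1 := δ * (3 / (2 * τ)) - α with hc1
  set c2 := δ / r with hc2
  have hc20 : 0 < c2 := by positivity
  set g := hopfBar l x0 c1 c2 β with hg
  have hgC : ContDiff ℝ 2 g := hopfBar_contDiff l x0 c1 c2 β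
  have hO := hopfCyl_isOpen l x0 τ r
  have hcoord : Continuous (fun y : EuclideanSpace ℝ (Fin n) => y l) := hopf_cont_coord l
  have hδτ : δ * (3 / (2 * τ)) ≤ 3 / 4 * a := by
    rw [← mul_div_assoc, div_le_iff₀ (by positivity)]
    nlinarith
  have hδτ0 : 0 < δ * (3 / (2 * τ)) := by positivity
  have hc2r : c2 * r = δ := by rw [hc2]; field_simp
  have key := hopf_abp (u := fun y => v y + g y) (ℓ := fun y => max 0 (α * y l - δ * r) + g y)
    (f := fun x => b x * (4 * a / lam)) (Ω := hopfCyl l x0 τ r) (d := 4 * r) (s := s)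
    hs hO ?_ (hv.add hgC.contDiffOn) ?_ ?_ ?_ (hb.mul continuousOn_const) ?_ hInt
  · intro y hy
    have := key y hy
    simp only [hg, hopfBar, hc1] at this
    linarith
  · intro x hx y hy
    have h1 := hopfCyl_norm hτ0 hτ hr hx
    have h2 := hopfCyl_norm hτ0 hτ hr hy
    calc ‖x - y‖ = ‖(x - x0) - (y - x0)‖ := by simp
      _ ≤ ‖x - x0‖ + ‖y - x0‖ := norm_sub_le _ _
      _ ≤ 4 * r := by linarith
  · have := hgC.continuous
    fun_prop
  · intro x hx
    simp only [add_le_add_iff_right]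
    exact max_le (hv0 x hx) (hlow x hx)
  · intro x hx hxn
    obtain ⟨h1, h2, h3⟩ := hopfCyl_closure l x0 τ r hx
    have hR : 0 ≤ ‖x - x0‖ ^ 2 - (x l) ^ 2 := by
      have h4 : |(x - x0) l| ≤ ‖x - x0‖ := by simpa using PiLp.norm_apply_le (x - x0) l
      have h5 : (x - x0) l = x l := by simp [hx0]
      rw [h5] at h4
      have := sq_le_sq' (by linarith [abs_nonneg (x l), norm_nonneg (x - x0)]) h4
      rw [sq_abs] at this
      linarith
    have hgx : g x = c1 * x l + c2 * ((‖x - x0‖ ^ 2 - (x l) ^ 2) - (β - 1) * (x l) ^ 2) := by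
      simp only [hg, hopfBar]; ring
    set R := ‖x - x0‖ ^ 2 - (x l) ^ 2 with hRdef
    show 0 ≤ max 0 (α * x l - δ * r) + g x
    rw [hgx, mul_sub]
    have hbt : β * x l ≤ r / 2 := by
      have t1 := mul_le_mul_of_nonneg_left h3 hβ0.le
      have t2 : β * (τ * r) = r / 2 := by rw [← mul_assoc, hβτ]; ring
      linarith
    by_cases hx1 : x l ≤ 0
    · have : x l = 0 := le_antisymm hx1 h2
      rw [this]
      have := le_max_left 0 (α * 0 - δ * r)
      have := mul_nonneg hc20.le hR
      linarith
    · push Not at hx1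
      have hmx := le_max_right 0 (α * x l - δ * r)
      have e1 : α * x l + c1 * x l = δ * (3 / (2 * τ)) * x l := by rw [hc1]; ring
      have h6 : c2 * ((β - 1) * (x l) ^ 2) ≤ δ * x l / 2 := by
        have : (β - 1) * (x l) ^ 2 ≤ r * x l / 2 := by
          have t1 := mul_le_mul_of_nonneg_right hbt hx1.le
          have t2 := sq_nonneg (x l)
          linarith
        calc _ ≤ c2 * (r * x l / 2) := by gcongr
          _ = (c2 * r) * x l / 2 := by ring
          _ = _ := by rw [hc2r]
      have h32 : 3 ≤ 3 / (2 * τ) := by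
        rw [le_div_iff₀ (by positivity)]; linarith
      by_cases hx2 : τ * r ≤ x l
      · have e2 : x l = τ * r := le_antisymm h3 hx2
        have e3 : δ * (3 / (2 * τ)) * x l = 3 / 2 * (δ * r) := by
          rw [e2]; field_simp
        have e4 : δ * x l / 2 ≤ δ * r / 4 := by
          rw [e2]
          have := mul_le_mul_of_nonneg_right hτ (mul_pos hδ0 hr).le
          nlinarith
        have := mul_nonneg hc20.le hR
        have := mul_pos hδ0 hr
        linarith
      · push Not at hx2
        have hx3 : r ^ 2 ≤ R := by
          by_contra hcon
          push Not at hcon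
          exact hxn ⟨hcon, hx1, hx2⟩
        have e5 : δ * r ≤ c2 * R := by
          calc δ * r = c2 * r ^ 2 := by rw [← hc2r]; ring
            _ ≤ _ := by gcongr
        have e6 : 3 * (δ * x l) ≤ δ * (3 / (2 * τ)) * x l := by
          have := mul_le_mul_of_nonneg_right h32 (mul_pos hδ0 hx1).le
          linarith
        have := mul_pos hδ0 hx1
        linarith
  · intro x hx hps hsx
    have hgn : ‖fderiv ℝ g x‖ ≤ 3 * a := by
      have h1 := hopfBar_norm l x0 c1 c2 β hc20.le hβ0.le x
      have h2 := hopfCyl_norm hτ0 hτ hr hx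
      have h3 : |c1| ≤ 7 / 4 * a := by
        rw [abs_le]; constructor <;> linarith
      have h4 : β * |x l| ≤ r / 2 := by
        rw [abs_of_pos hx.2.1]
        have t1 := mul_le_mul_of_nonneg_left hx.2.2.le hβ0.le
        have t2 : β * (τ * r) = r / 2 := by rw [← mul_assoc, hβτ]; ring
        linarith
      have h5 : c2 * (2 * ‖x - x0‖ + 2 * β * |x l|) ≤ 5 * δ := by
        calc _ ≤ c2 * (5 * r) := by
              apply mul_le_mul_of_nonneg_left _ hc20.le
              linarith
          _ = 5 * (c2 * r) := by ring
          _ = _ := by rw [hc2r]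
      have h6 : δ ≤ a / 4 := by nlinarith
      linarith
    have hxv := hv.contDiffAt (hO.mem_nhds hx)
    have := hopf_pde hlam hLam hxv hgC.contDiffAt (hb0 x hx) (hsup x hx)
      (fun A h1 h2 => hopfBar_trace l x0 c1 c2 β lam Lam hc20.le hβ0.le hβ x A h1 h2) hgn hps hsx
    refine this.trans ?_
    apply mul_le_mul_of_nonneg_left _ (hb0 x hx)
    gcongr
    linarith

theorem hopf_iter {n : ℕ} {l : Fin n} {x0 : EuclideanSpace ℝ (Fin n)}
    {b v : EuclideanSpace ℝ (Fin n) → ℝ} {lam Lam β τ r0 a ρ θ : ℝ}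
    (hlam : 0 < lam) (hLam : lam ≤ Lam) (hx0 : x0 l = 0)
    (hτ0 : 0 < τ) (hτ : τ ≤ 1 / 2) (hβτ : β * τ = 1 / 2) (hβ : n * Lam ≤ β * lam)
    (hr0 : 0 < r0) (ha : 0 < a) (hρ0 : 0 < ρ) (hρ : ρ ≤ 1 / 32) (hθ : θ = 1 / 16)
    (hb : ContinuousOn b (hopfCyl l x0 τ r0)) (hb0 : ∀ x ∈ hopfCyl l x0 τ r0, 0 ≤ b x)
    (hv : ContDiffOn ℝ 2 v (hopfCyl l x0 τ r0)) (hv0 : ∀ x ∈ hopfCyl l x0 τ r0, 0 ≤ v x)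
    (hsup : ∀ x ∈ hopfCyl l x0 τ r0,
      pucciMinus n lam Lam (hess n v x) - b x * gradNorm n v x ≤ 0)
    (hlow : ∀ x ∈ hopfCyl l x0 τ r0, a * x l - τ * a / 2 * r0 ≤ v x)
    (hInt : ∀ k : ℕ, ∫⁻ x in hopfCyl l x0 τ (ρ ^ k * r0),
        ENNReal.ofReal ((b x * (4 * a / lam)) ^ n) <
      volume (Metric.ball (0 : EuclideanSpace ℝ (Fin n)) (ρ ^ 2 / 4 * (τ * a / 2 * θ ^ k)))) :
    ∀ k : ℕ, ∀ x ∈ hopfCyl l x0 τ (ρ ^ k * r0),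
      a * (1 + 4 * θ ^ k) / 5 * x l - (τ * a / 2 * θ ^ k) * (ρ ^ k * r0) ≤ v x := by
  have hβ1 : 1 ≤ β := by nlinarith
  have hmono : ∀ r r' : ℝ, 0 < r → r ≤ r' → hopfCyl l x0 τ r ⊆ hopfCyl l x0 τ r' := by
    rintro r r' hr hrr y ⟨h1, h2, h3⟩
    refine ⟨h1.trans_le (pow_le_pow_left₀ hr.le hrr 2), h2, h3.trans_le ?_⟩
    exact mul_le_mul_of_nonneg_left hrr hτ0.le
  intro k
  induction k with
  | zero =>
    intro x hx
    have := hlow x (by simpa using hx)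
    simp
    linarith
  | succ k ih =>
    have hrk : 0 < ρ ^ k * r0 := by positivity
    have hρk : ρ ^ k ≤ 1 := pow_le_one₀ hρ0.le (by linarith)
    have hθk0 : 0 < θ ^ k := by rw [hθ]; positivity
    have hθk : θ ^ k ≤ 1 := pow_le_one₀ (by rw [hθ]; norm_num) (by rw [hθ]; norm_num)
    have hsub : hopfCyl l x0 τ (ρ ^ k * r0) ⊆ hopfCyl l x0 τ r0 :=
      hmono _ _ hrk (mul_le_of_le_one_left hr0.le hρk)
    set δ := τ * a / 2 * θ ^ k with hδ
    set r := ρ ^ k * r0 with hr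
    have hδ0 : 0 < δ := by positivity
    have hδ1 : δ ≤ τ * a / 2 := mul_le_of_le_one_right (by positivity) hθk
    have hδa : δ ≤ a := by nlinarith
    have hρ2 : ρ ^ 2 ≤ 1 := pow_le_one₀ hρ0.le (by linarith)
    have hstep := hopf_step (s := ρ ^ 2 / 4 * δ) (α := a * (1 + 4 * θ ^ k) / 5) (δ := δ)
      hlam hLam hx0 hτ0 hτ hβτ hβ hrk ha (by positivity)
      (by nlinarith) hδ0 hδ1 (by positivity) (by nlinarith) (hb.mono hsub)
      (fun x hx => hb0 x (hsub hx)) (hv.mono hsub) (fun x hx => hv0 x (hsub hx))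
      (fun x hx => hsup x (hsub hx)) ih (hInt k)
    intro y hy
    have hr' : ρ ^ (k + 1) * r0 = ρ * r := by rw [hr]; ring
    rw [hr'] at hy ⊢
    have hyr : y ∈ hopfCyl l x0 τ r :=
      hmono _ _ (by positivity) (by nlinarith) hy
    have h1 := hstep y hyr
    obtain ⟨hy1, hy2, hy3⟩ := hy
    have e1 : δ / r * (‖y - x0‖ ^ 2 - β * (y l) ^ 2) ≤ δ * ρ ^ 2 * r := by
      calc _ ≤ δ / r * ((ρ * r) ^ 2) := by
            apply mul_le_mul_of_nonneg_left _ (by positivity)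
            have := mul_le_mul_of_nonneg_right hβ1 (sq_nonneg (y l))
            linarith
        _ = _ := by field_simp
    have e2 : δ * (3 / (2 * τ)) = 3 / 4 * a * θ ^ k := by
      rw [hδ]; field_simp; norm_num
    have e3 : τ * a / 2 * θ ^ (k + 1) = δ / 16 := by rw [hδ, pow_succ, hθ]; ring
    have e4 : a * (1 + 4 * θ ^ (k + 1)) / 5 = a * (1 + 4 * θ ^ k) / 5 - 3 / 4 * a * θ ^ k := by
      rw [pow_succ]; rw [hθ]; ring
    rw [e3, e4]
    rw [e2] at h1
    have e5 : 2 * (δ * ρ ^ 2 * r) ≤ δ / 16 * (ρ * r) := by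
      have : 0 ≤ δ * ρ * r := by positivity
      have := mul_le_mul_of_nonneg_left hρ this
      nlinarith
    have e6 : ρ ^ 2 / 4 * δ * (4 * r) = δ * ρ ^ 2 * r := by ring
    linarith

theorem hopf_holder {n : ℕ} (hn : 2 ≤ n) {q : ℝ} (hq : (n : ℝ) < q)
    {b : EuclideanSpace ℝ (Fin n) → ℝ} {W : Set (EuclideanSpace ℝ (Fin n))} (hW : IsOpen W)
    (hb : ContinuousOn b W) (hbq : ∫⁻ x in W, ENNReal.ofReal (|b x| ^ q) < ⊤) :
    ∃ σ C : ℝ, 0 < σ ∧ 0 ≤ C ∧ ∀ (D : Set (EuclideanSpace ℝ (Fin n)))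
      (x0 : EuclideanSpace ℝ (Fin n)) (r : ℝ), IsOpen D → D ⊆ W → 0 < r →
      D ⊆ Metric.ball x0 (2 * r) → ∀ t : ℝ, 0 ≤ t →
      ∫⁻ x in D, ENNReal.ofReal ((b x * t) ^ n) ≤ ENNReal.ofReal (t ^ n * (C * r ^ σ)) := by
  have hn0 : (0:ℝ) < n := by positivity
  have hq0 : 0 < q := hn0.trans hq
  have : Nontrivial (EuclideanSpace ℝ (Fin n)) := by
    have : Nonempty (Fin n) := ⟨⟨0, by omega⟩⟩
    infer_instance
  set σ := (n:ℝ) * (1 - n / q) with hσ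
  have hnq : 0 < 1 - n / q := by
    rw [sub_pos, div_lt_one hq0]; exact hq
  set J := ∫⁻ x in W, ENNReal.ofReal (|b x| ^ q) with hJ
  set ω := volume (Metric.ball (0 : EuclideanSpace ℝ (Fin n)) 1) with hω
  have hωt : ω ≠ ⊤ := measure_ball_lt_top.ne
  set C' : ℝ≥0∞ := J ^ (n / q) * (ENNReal.ofReal (2 ^ n) * ω) ^ (1 - n / q) with hC'
  have hCtop : C' ≠ ⊤ := by
    apply ENNReal.mul_ne_top
    · exact ENNReal.rpow_ne_top_of_nonneg (by positivity) hbq.ne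
    · exact ENNReal.rpow_ne_top_of_nonneg hnq.le (ENNReal.mul_ne_top ENNReal.ofReal_ne_top hωt)
  refine ⟨σ, C'.toReal, by positivity, ENNReal.toReal_nonneg, ?_⟩
  intro D x0 r hD hDW hr hDb t ht
  have hm : AEStronglyMeasurable b (volume.restrict D) :=
    (hb.mono hDW).aestronglyMeasurable hD.measurableSet
  have h1 := eLpNorm'_le_eLpNorm'_mul_rpow_measure_univ (μ := volume.restrict D) (f := b)
    hn0 hq.le hm
  have conv : ∀ (p : ℝ), 0 < p → ∀ x, ‖b x‖ₑ ^ p = ENNReal.ofReal (|b x| ^ p) := by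
    intro p hp x
    rw [← ofReal_norm, Real.norm_eq_abs, ENNReal.ofReal_rpow_of_nonneg (abs_nonneg _) hp.le]
  have h2 : ∫⁻ x in D, ENNReal.ofReal (|b x| ^ (n:ℝ)) ≤ C' * ENNReal.ofReal (r ^ σ) := by
    have h3 := ENNReal.rpow_le_rpow h1 hn0.le
    rw [ENNReal.mul_rpow_of_nonneg _ _ hn0.le] at h3
    simp only [eLpNorm'_eq_lintegral_enorm, ← ENNReal.rpow_mul] at h3
    rw [one_div_mul_cancel hn0.ne', ENNReal.rpow_one, Measure.restrict_apply_univ] at h3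
    simp only [conv _ hn0, conv _ hq0] at h3
    have hJD : ∫⁻ x in D, ENNReal.ofReal (|b x| ^ q) ≤ J := lintegral_mono_set hDW
    have hvD : volume D ≤ ENNReal.ofReal (r ^ n) * (ENNReal.ofReal (2 ^ n) * ω) := by
      refine (measure_mono hDb).trans ?_
      rw [Measure.addHaar_ball _ _ (by positivity), mul_pow, ← mul_assoc,
        ENNReal.ofReal_mul (by positivity), mul_comm (ENNReal.ofReal (2 ^ _))]
      simp [hω]
    have e1 : (1 / (n:ℝ) - 1 / q) * n = 1 - n / q := by field_simp
    have e2 : 1 / q * (n:ℝ) = n / q := by field_simp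
    rw [e1, e2] at h3
    refine h3.trans ?_
    calc _ ≤ J ^ (n / q) * (ENNReal.ofReal (r ^ n) * (ENNReal.ofReal (2 ^ n) * ω)) ^ (1 - n / q) := by
          gcongr
      _ = _ := by
          rw [ENNReal.mul_rpow_of_nonneg _ _ hnq.le, hC', hσ,
            ENNReal.ofReal_rpow_of_nonneg (by positivity) hnq.le, Real.rpow_mul hr.le,
            Real.rpow_natCast]
          ring
  calc ∫⁻ x in D, ENNReal.ofReal ((b x * t) ^ n)
      ≤ ∫⁻ x in D, ENNReal.ofReal (t ^ n) * ENNReal.ofReal (|b x| ^ (n:ℝ)) := by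
        apply lintegral_mono
        intro x
        show ENNReal.ofReal ((b x * t) ^ n) ≤ ENNReal.ofReal (t ^ n) * ENNReal.ofReal (|b x| ^ (n:ℝ))
        rw [← ENNReal.ofReal_mul (by positivity), Real.rpow_natCast]
        apply ENNReal.ofReal_le_ofReal
        rw [mul_pow, mul_comm, ← abs_pow]
        exact mul_le_mul_of_nonneg_left (le_abs_self _) (by positivity)
    _ = ENNReal.ofReal (t ^ n) * ∫⁻ x in D, ENNReal.ofReal (|b x| ^ (n:ℝ)) :=
        lintegral_const_mul' _ _ ENNReal.ofReal_ne_top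
    _ ≤ ENNReal.ofReal (t ^ n) * (C' * ENNReal.ofReal (r ^ σ)) := by gcongr
    _ = _ := by
        rw [ENNReal.ofReal_mul (by positivity), ENNReal.ofReal_mul ENNReal.toReal_nonneg,
          ENNReal.ofReal_toReal hCtop]

theorem hopf_compact_low {n : ℕ} (hn : 1 ≤ n) {v : EuclideanSpace ℝ (Fin n) → ℝ}
    (hv : ContinuousOn v (halfBall n hn 2)) (hvpos : ∀ x ∈ halfBall n hn 2, 0 < v x)
    {h : ℝ} (hh : 0 < h) :
    ∃ m : ℝ, 0 < m ∧ ∀ y : EuclideanSpace ℝ (Fin n), ‖y‖ ≤ 7 / 4 → h ≤ lastC n hn y → m ≤ v y := by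
  set C : Set (EuclideanSpace ℝ (Fin n)) := {y | ‖y‖ ≤ 7 / 4 ∧ h ≤ lastC n hn y} with hC
  have hCs : C ⊆ halfBall n hn 2 := by
    rintro y ⟨h1, h2⟩
    exact ⟨by linarith, by linarith⟩
  have hcl : IsClosed C := (isClosed_le continuous_norm continuous_const).inter
    (isClosed_le continuous_const (hopf_cont_coord _))
  have hcb : Bornology.IsBounded C := by
    refine (Metric.isBounded_closedBall (x := 0) (r := 7 / 4)).subset ?_
    rintro y ⟨h1, -⟩
    simpa using h1
  have hcc : IsCompact C := Metric.isCompact_of_isClosed_isBounded hcl hcb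
  rcases C.eq_empty_or_nonempty with he | hne
  · refine ⟨1, one_pos, fun y h1 h2 => ?_⟩
    have : y ∈ C := ⟨h1, h2⟩
    simp [he] at this
  · obtain ⟨z, hz, hzm⟩ := hcc.exists_isMinOn hne (hv.mono hCs)
    exact ⟨v z, hvpos z (hCs hz), fun y h1 h2 => hzm ⟨h1, h2⟩⟩

theorem hopf_halfBall_isOpen {n : ℕ} (hn : 1 ≤ n) (R : ℝ) : IsOpen (halfBall n hn R) :=
  (isOpen_lt continuous_norm continuous_const).inter
    (isOpen_lt continuous_const (hopf_cont_coord _))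

theorem hopf_consts {n : ℕ} {σ A B : ℝ} (hσ : 0 < σ) (hB : 0 < B) :
    ∃ ρ : ℝ, 0 < ρ ∧ ρ ≤ 1 / 32 ∧ ρ ^ σ ≤ (1 / 16 : ℝ) ^ n ∧
      ∃ r0 : ℝ, 0 < r0 ∧ r0 ≤ 1 / 4 ∧ A * r0 ^ σ < (ρ ^ 2 / 4) ^ n * B := by
  have hlim : Filter.Tendsto (fun x : ℝ => x ^ σ) (nhdsWithin 0 (Set.Ioi 0)) (nhds 0) := by
    have := (Real.continuousAt_rpow_const 0 σ (Or.inr hσ.le)).tendsto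
    rw [Real.zero_rpow hσ.ne'] at this
    exact this.mono_left nhdsWithin_le_nhds
  have hlim2 : Filter.Tendsto (fun x : ℝ => A * x ^ σ) (nhdsWithin 0 (Set.Ioi 0)) (nhds 0) := by
    simpa using hlim.const_mul A
  have hle : ∀ c : ℝ, 0 < c → ∀ᶠ x in nhdsWithin (0:ℝ) (Set.Ioi 0), x ≤ c := fun c hc =>
    nhdsWithin_le_nhds (Iic_mem_nhds hc)
  have hpos : ∀ᶠ x in nhdsWithin (0:ℝ) (Set.Ioi 0), 0 < x := self_mem_nhdsWithin
  obtain ⟨ρ, h1, h2, h3⟩ := ((hlim.eventually (Iic_mem_nhds (show (0:ℝ) < (1 / 16) ^ n by positivity))).and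
    ((hle (1 / 32) (by norm_num)).and hpos)).exists
  refine ⟨ρ, h3, h2, h1, ?_⟩
  obtain ⟨r0, k1, k2, k3⟩ := ((hlim2.eventually (Iio_mem_nhds
    (show (0:ℝ) < (ρ ^ 2 / 4) ^ n * B by positivity))).and
    ((hle (1 / 4) (by norm_num)).and hpos)).exists
  exact ⟨r0, k3, k2, k1⟩

/-- Hopf-type lemma for supersolutions in half-balls. -/
theorem hopf_lemma_half_ball
    (n : ℕ) (hn : 2 ≤ n) (lam Lam : ℝ) (hlam : 0 < lam) (hLam : lam ≤ Lam)
    (q : ℝ) (hq : (n : ℝ) < q)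
    (b v : EuclideanSpace ℝ (Fin n) → ℝ)
    (hbcont : ContinuousOn b (halfBall n (by omega) 2))
    (hb0 : ∀ x ∈ halfBall n (by omega : 1 ≤ n) 2, 0 ≤ b x)
    (hbq : LpNormE n q b (halfBall n (by omega) 2) < ⊤)
    (hv : ContDiffOn ℝ 2 v (halfBall n (by omega) 2))
    (hvpos : ∀ x ∈ halfBall n (by omega : 1 ≤ n) 2, 0 < v x)
    (hsuper : ∀ x ∈ halfBall n (by omega : 1 ≤ n) 2,
      pucciMinus n lam Lam (hess n v x) - b x * gradNorm n v x ≤ 0) :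
    0 < ⨅ x : halfBall n (by omega : 1 ≤ n) 1, v x.1 / lastC n (by omega) x.1 := by
  have hn1 : 1 ≤ n := by omega
  have hOpen : IsOpen (halfBall n hn1 2) := hopf_halfBall_isOpen hn1 2
  set l : Fin n := ⟨n - 1, by omega⟩ with hl
  have hlast : ∀ x : EuclideanSpace ℝ (Fin n), lastC n hn1 x = x l := fun x => rfl
  have hn2 : (2 : ℝ) ≤ n := by exact_mod_cast hn
  have hq0 : 0 < q := by linarith
  have hbq' : ∫⁻ x in halfBall n hn1 2, ENNReal.ofReal (|b x| ^ q) < ⊤ := by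
    unfold LpNormE at hbq
    by_contra hcon
    have ht : ∫⁻ x in halfBall n hn1 2, ENNReal.ofReal (|b x| ^ q) = ⊤ := not_lt_top_iff.1 hcon
    rw [ht, ENNReal.top_rpow_of_pos (by positivity)] at hbq
    exact lt_irrefl _ hbq
  obtain ⟨σ, Cb, hσ, hCb, hhol⟩ := hopf_holder hn hq hOpen hbcont hbq'
  set β : ℝ := n * Lam / lam with hβ
  have hβlam : n * Lam ≤ β * lam := by rw [hβ]; field_simp; exact le_rfl
  have hβ2 : 2 ≤ β := by
    rw [hβ, le_div_iff₀ hlam]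
    nlinarith
  set τ : ℝ := 1 / (2 * β) with hτ
  have hτ0 : 0 < τ := by positivity
  have hβτ : β * τ = 1 / 2 := by rw [hτ]; field_simp
  have hτh : τ ≤ 1 / 2 := by nlinarith
  have hNT : Nontrivial (EuclideanSpace ℝ (Fin n)) := by
    have : Nonempty (Fin n) := ⟨⟨0, by omega⟩⟩
    infer_instance
  set ω := (volume (Metric.ball (0 : EuclideanSpace ℝ (Fin n)) 1)).toReal with hω
  have hωt : volume (Metric.ball (0 : EuclideanSpace ℝ (Fin n)) 1) ≠ ⊤ := measure_ball_lt_top.ne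
  have hω0 : 0 < ω := ENNReal.toReal_pos (Metric.measure_ball_pos _ _ one_pos).ne' hωt
  have hball : ∀ s : ℝ, 0 ≤ s → volume (Metric.ball (0 : EuclideanSpace ℝ (Fin n)) s)
      = ENNReal.ofReal (s ^ n * ω) := by
    intro s hs
    rw [Measure.addHaar_ball _ _ hs, ENNReal.ofReal_mul (by positivity), hω,
      ENNReal.ofReal_toReal hωt]
    simp
  obtain ⟨ρ, hρ0, hρ, hρσ, r0, hr0, hr04, hr0lt⟩ := hopf_consts (n := n) (σ := σ)
    (A := (4 / lam) ^ n * Cb) (B := (τ / 2) ^ n * ω) hσ (by positivity)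
  obtain ⟨m, hm0, hm⟩ := hopf_compact_low hn1 hv.continuousOn hvpos
    (h := τ * r0 / 2) (by positivity)
  set a : ℝ := 2 * m / (τ * r0) with ha
  have ha0 : 0 < a := by positivity
  have ham : τ * a / 2 * r0 = m := by rw [ha]; field_simp
  -- main claim at boundary points
  have hmain : ∀ x0 : EuclideanSpace ℝ (Fin n), x0 l = 0 → ‖x0‖ ≤ 9 / 8 →
      ∀ k : ℕ, ∀ x ∈ hopfCyl l x0 τ (ρ ^ k * r0),
      a * (1 + 4 * (1 / 16 : ℝ) ^ k) / 5 * x l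
        - (τ * a / 2 * (1 / 16 : ℝ) ^ k) * (ρ ^ k * r0) ≤ v x := by
    intro x0 hx0 hx0n
    have hsub : ∀ r : ℝ, 0 < r → r ≤ 1 / 4 → ∀ y ∈ hopfCyl l x0 τ r, ‖y‖ ≤ 7 / 4 ∧
        y ∈ halfBall n hn1 2 := by
      intro r hr hr4 y hy
      have h1 := hopfCyl_norm hτ0 hτh hr hy
      have h2 : ‖y‖ ≤ ‖y - x0‖ + ‖x0‖ := by simpa using norm_add_le (y - x0) x0
      exact ⟨by linarith, by linarith, hy.2.1⟩
    have hs0 := fun y hy => (hsub r0 hr0 hr04 y hy).2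
    refine hopf_iter (b := b) hlam hLam hx0 hτ0 hτh hβτ hβlam hr0 ha0 hρ0 hρ rfl
      (hbcont.mono hs0) (fun x hx => hb0 x (hs0 x hx)) (hv.mono hs0)
      (fun x hx => (hvpos x (hs0 x hx)).le) (fun x hx => hsuper x (hs0 x hx)) ?_ ?_
    · intro x hx
      have hx7 := (hsub r0 hr0 hr04 x hx).1
      have hvx := hvpos x (hs0 x hx)
      rw [ham]
      have e1 : a * (τ * r0) = 2 * m := by rw [ha]; field_simp
      by_cases hxl : τ * r0 / 2 ≤ x l
      · have := hm x hx7 hxl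
        have := mul_le_mul_of_nonneg_left hx.2.2.le ha0.le
        linarith
      · push Not at hxl
        have := mul_le_mul_of_nonneg_left hxl.le ha0.le
        linarith
    · intro k
      have hρk : ρ ^ k ≤ 1 := pow_le_one₀ hρ0.le (by linarith)
      have hrk : 0 < ρ ^ k * r0 := by positivity
      have hrk4 : ρ ^ k * r0 ≤ 1 / 4 := (mul_le_of_le_one_left hr0.le hρk).trans hr04
      refine (hhol (hopfCyl l x0 τ (ρ ^ k * r0)) x0 (ρ ^ k * r0) (hopfCyl_isOpen _ _ _ _)
        (fun y hy => (hsub _ hrk hrk4 y hy).2) hrk ?_ (4 * a / lam) (by positivity)).trans_lt ?_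
      · intro y hy
        rw [mem_ball_iff_norm]
        exact hopfCyl_norm hτ0 hτh hrk hy
      · rw [hball _ (by positivity)]
        apply (ENNReal.ofReal_lt_ofReal_iff (by positivity)).2
        have e1 : (ρ ^ k * r0) ^ σ = (ρ ^ σ) ^ k * r0 ^ σ := by
          rw [Real.mul_rpow (by positivity) hr0.le, ← Real.rpow_natCast, ← Real.rpow_natCast,
            ← Real.rpow_mul hρ0.le, ← Real.rpow_mul hρ0.le, mul_comm (k:ℝ) σ]
        have e2 : (ρ ^ σ) ^ k ≤ ((1 / 16 : ℝ) ^ n) ^ k :=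
          pow_le_pow_left₀ (by positivity) hρσ k
        have e3 : 0 ≤ (4 / lam) ^ n * Cb * r0 ^ σ := by positivity
        have e4 : 0 < ((1 / 16 : ℝ) ^ n) ^ k := by positivity
        calc (4 * a / lam) ^ n * (Cb * (ρ ^ k * r0) ^ σ)
            = a ^ n * ((ρ ^ σ) ^ k * ((4 / lam) ^ n * Cb * r0 ^ σ)) := by
              rw [e1, show 4 * a / lam = a * (4 / lam) by ring, mul_pow]; ring
          _ ≤ a ^ n * (((1 / 16 : ℝ) ^ n) ^ k * ((4 / lam) ^ n * Cb * r0 ^ σ)) := by gcongr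
          _ < a ^ n * (((1 / 16 : ℝ) ^ n) ^ k * ((ρ ^ 2 / 4) ^ n * ((τ / 2) ^ n * ω))) := by
              gcongr
          _ = (ρ ^ 2 / 4 * (τ * a / 2 * (1 / 16) ^ k)) ^ n * ω := by
              rw [← pow_mul, mul_comm n k, pow_mul, show τ * a / 2 = a * (τ / 2) by ring,
                mul_pow, mul_pow, mul_pow]
              ring
  obtain ⟨k0, hk0⟩ := exists_pow_lt_of_lt_one (show (0:ℝ) < ρ ^ 2 / 5 by positivity)
    (show (1 / 16 : ℝ) < 1 by norm_num)
  set h0 : ℝ := τ * r0 * ρ ^ (k0 + 1) with hh0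
  have hh00 : 0 < h0 := by positivity
  obtain ⟨m', hm'0, hm'⟩ := hopf_compact_low hn1 hv.continuousOn hvpos hh00
  have hfin : ∀ x ∈ halfBall n hn1 1, min m' (a / 10) ≤ v x / lastC n hn1 x := by
    rintro x ⟨hx1, hx2⟩
    rw [le_div_iff₀ hx2]
    rw [hlast] at hx2 ⊢
    have hxl1 : x l ≤ 1 := by
      have : |x l| ≤ ‖x‖ := by simpa using PiLp.norm_apply_le x l
      linarith [le_abs_self (x l)]
    by_cases hx : h0 ≤ x l
    · have h1 := hm' x (by linarith) hx
      have h2 : min m' (a / 10) * x l ≤ m' * 1 :=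
        mul_le_mul (min_le_left _ _) hxl1 hx2.le hm'0.le
      linarith
    · push Not at hx
      have hρ1 : ρ < 1 := by linarith
      have hτr : 0 < τ * r0 := by positivity
      have hX0 : 0 < x l / (τ * r0) := by positivity
      have hXk : x l / (τ * r0) < ρ ^ (k0 + 1) := by
        rw [div_lt_iff₀ hτr]; linarith
      obtain ⟨N, hN1, hN2⟩ := exists_nat_pow_near_of_lt_one hX0
        (hXk.le.trans (pow_le_one₀ hρ0.le hρ1.le)) hρ0 hρ1
      have hNk : k0 + 1 ≤ N := by
        by_contra hcon
        have : ρ ^ (k0 + 1) ≤ ρ ^ (N + 1) := pow_le_pow_of_le_one hρ0.le hρ1.le (by omega)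
        linarith
      obtain ⟨j, rfl⟩ : ∃ j, N = j + 1 := ⟨N - 1, by omega⟩
      have hj : k0 ≤ j := by omega
      have hθj : (1 / 16 : ℝ) ^ j ≤ ρ ^ 2 / 5 :=
        (pow_le_pow_of_le_one (by norm_num) (by norm_num) hj).trans hk0.le
      have hxlt : x l < τ * (ρ ^ j * r0) := by
        rw [div_le_iff₀ hτr] at hN2
        have : ρ ^ (j + 1) < ρ ^ j := pow_lt_pow_right_of_lt_one₀ hρ0 hρ1 (by omega)
        have := mul_lt_mul_of_pos_right this hτr
        linarith
      have hxgt : ρ ^ 2 * (τ * (ρ ^ j * r0)) < x l := by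
        rw [lt_div_iff₀ hτr] at hN1
        have e : ρ ^ (j + 1 + 1) * (τ * r0) = ρ ^ 2 * (τ * (ρ ^ j * r0)) := by ring
        linarith
      set x0 : EuclideanSpace ℝ (Fin n) := x - EuclideanSpace.single l (x l) with hx0
      have hx0l : x0 l = 0 := by simp [hx0]
      have hxx0 : ‖x - x0‖ = x l := by
        simp [hx0, abs_of_pos hx2]
      have hxl8 : x l ≤ 1 / 8 := by
        have t1 : ρ ^ j * r0 ≤ 1 / 4 :=
          (mul_le_of_le_one_left hr0.le (pow_le_one₀ hρ0.le hρ1.le)).trans hr04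
        have t2 : 0 < ρ ^ j * r0 := by positivity
        nlinarith
      have hx0n : ‖x0‖ ≤ 9 / 8 := by
        have : ‖x0‖ ≤ ‖x‖ + ‖x - x0‖ := by
          have := norm_sub_le x (x - x0)
          simpa using this
        rw [hxx0] at this
        linarith
      have hrj : 0 < ρ ^ j * r0 := by positivity
      have hmem : x ∈ hopfCyl l x0 τ (ρ ^ j * r0) := by
        refine ⟨?_, hx2, hxlt⟩
        rw [hxx0]
        simp only [sub_self]
        positivity
      have hres := hmain x0 hx0l hx0n j x hmem
      have p1 : 0 < (1 / 16 : ℝ) ^ j := by positivity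
      have p2 : (τ * a / 2 * (1 / 16 : ℝ) ^ j) * (ρ ^ j * r0) ≤ a / 10 * x l := by
        calc (τ * a / 2 * (1 / 16 : ℝ) ^ j) * (ρ ^ j * r0)
            = (1 / 16 : ℝ) ^ j * (a / 2 * (τ * (ρ ^ j * r0))) := by ring
          _ ≤ ρ ^ 2 / 5 * (a / 2 * (τ * (ρ ^ j * r0))) := by gcongr
          _ = a / 10 * (ρ ^ 2 * (τ * (ρ ^ j * r0))) := by ring
          _ ≤ a / 10 * x l := by gcongr
      have p3 : a / 5 * x l ≤ a * (1 + 4 * (1 / 16 : ℝ) ^ j) / 5 * x l := by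
        apply mul_le_mul_of_nonneg_right _ hx2.le
        have := mul_pos ha0 p1
        linarith
      have p4 : min m' (a / 10) * x l ≤ a / 10 * x l :=
        mul_le_mul_of_nonneg_right (min_le_right _ _) hx2.le
      linarith
  have hne : Nonempty (halfBall n hn1 1) := by
    refine ⟨⟨EuclideanSpace.single l (1 / 2), ?_, ?_⟩⟩
    · simp; norm_num
    · rw [hlast]; simp
  have hpos : 0 < min m' (a / 10) := lt_min hm'0 (by positivity)
  exact hpos.trans_le (le_ciInf fun x => hfin x.1 x.2)
end
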